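/- arXiv:2105.13201 — 6 statements merged into one kernel-verified Lean document; each statement's English description precedes it below -/
import Mathlib

section
/- Let d ≥ 1 and let K : 𝕋^d → ℝ^d be a measurable kernel satisfying either (i) K is bounded, or (ii) K(−x) = −K(x) for all x, K(0) = 0, and sup_x |x|·|K(x)| < ∞, where |x| denotes the distance from x to 0 in 𝕋^d. Let φ be a continuously differentiable real function on 𝕋^d, and for a finite signed measure ν on 𝕋^d define Ψ(ν) := ∬_{𝕋^d × 𝕋^d} φ(x) K(x−y) dν(x) dν(y) ∈ ℝ^d in case (i), and Ψ(ν) := (1/2) ∬_{𝕋^d × 𝕋^d} (φ(x) − φ(y)) K(x−y) dν(x) dν(y) ∈ ℝ^d in case (ii). Then there exists a constant C > 0, depending only on d, on φ, and on ‖K‖_{L^∞} in case (i), respectively sup_x |x||K(x)| in case (ii), such that for every integer N ≥ 2, every probability measure ρ̄ on 𝕋^d, and every probability measure ρ_N on (𝕋^d)^N with H(ρ_N | ρ̄^{⊗N}) < ∞: ∫_{(𝕋^d)^N} | Ψ(μ_N − ρ̄) | dρ_N ≤ (C/N) ( H(ρ_N | ρ̄^{⊗N}) + 1 ), where μ_N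 = (1/N) Σ_{i=1}^N δ_{x_i} is the empirical measure of (x_1,…,x_N) and |·| is the Euclidean norm on ℝ^d. -/
open MeasureTheory Classical

/-- The `d`-dimensional torus `𝕋^d = (ℝ/2πℤ)^d`. -/
abbrev Torus (d : ℕ) := Fin d → AddCircle (2 * Real.pi)

/-- The relative entropy `H(μ|ν) := ∫ (dμ/dν) log(dμ/dν) dν` if `μ ≪ ν` (and the integrand
is integrable; otherwise `+∞`), with values in the extended reals. -/
noncomputable def relEntropy {E : Type*} [MeasurableSpace E] (μ ν : Measure E) : EReal :=
  if μ ≪ ν ∧ Integrable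
      (fun x => (μ.rnDeriv ν x).toReal * Real.log (μ.rnDeriv ν x).toReal) ν
  then ((∫ x, (μ.rnDeriv ν x).toReal * Real.log (μ.rnDeriv ν x).toReal ∂ν : ℝ) : EReal)
  else ⊤

/-- The empirical measure `μ_N = N⁻¹ ∑_{i=1}^N δ_{x_i}` of a configuration
`x ∈ (𝕋^d)^N`. -/
noncomputable def empiricalMeasure (d N : ℕ) (x : Fin N → Torus d) : Measure (Torus d) :=
  (N : ENNReal)⁻¹ • ∑ i, Measure.dirac (x i)

/-- Case (i) bilinear pairing: `Ψ(μ₁,μ₂) = ∬ φ(x) K(x−y) dμ₁(x) dμ₂(y) ∈ ℝ^d`. -/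
noncomputable def psiBil₁ (d : ℕ) (K : Torus d → EuclideanSpace ℝ (Fin d))
    (φ : Torus d → ℝ) (μ₁ μ₂ : Measure (Torus d)) : EuclideanSpace ℝ (Fin d) :=
  ∫ x, ∫ y, φ x • K (x - y) ∂μ₂ ∂μ₁

/-- Case (ii) (symmetrized) bilinear pairing:
`Ψ(μ₁,μ₂) = (1/2) ∬ (φ(x) − φ(y)) K(x−y) dμ₁(x) dμ₂(y) ∈ ℝ^d`. -/
noncomputable def psiBil₂ (d : ℕ) (K : Torus d → EuclideanSpace ℝ (Fin d))
    (φ : Torus d → ℝ) (μ₁ μ₂ : Measure (Torus d)) : EuclideanSpace ℝ (Fin d) :=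
  ∫ x, ∫ y, ((2 : ℝ)⁻¹ * (φ x - φ y)) • K (x - y) ∂μ₂ ∂μ₁

/-- The value `Ψ(μ − ρ)` of the quadratic form associated to a bilinear pairing `Ψ`,
expanded bilinearly: `Ψ(μ−ρ) = Ψ(μ,μ) − Ψ(μ,ρ) − Ψ(ρ,μ) + Ψ(ρ,ρ)`. -/
noncomputable def psiDiff (d : ℕ)
    (Ψ : Measure (Torus d) → Measure (Torus d) → EuclideanSpace ℝ (Fin d))
    (μ ρ : Measure (Torus d)) : EuclideanSpace ℝ (Fin d) :=
  Ψ μ μ - Ψ μ ρ - Ψ ρ μ + Ψ ρ ρ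

/-!
Expanded bilinearly, `Ψ(μ_N − ρ)` is the V-statistic `N⁻² ∑ᵢⱼ h(xᵢ, xⱼ)`, where `h` is the doubly
centred version of the integrand of `Ψ`. This integrand is bounded: in the singular case the
Lipschitz bound on `φ` absorbs the factor `1 / |x - y|`. By the Donsker–Varadhan inequality, an
integral against `ρ_N` costs one relative entropy plus the logarithm of an exponential moment under
`ρ^{⊗N}`, so it is enough to bound the exponential moment of a multiple of order `1 / N` of the
double sum by a constant.

The diagonal is trivially of order `N`. Off the diagonal, each pair `i ≠ j` is separated by exactly
a quarter of the ordered bipartitions `(S, Sᶜ)`, so the double sum is four times the average of the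
bipartite sums over `i ∈ S`, `j ∉ S`. In a bipartite sum the two groups of variables are
independent: conditionally on the second group the first one contributes centred independent terms,
and what remains is the exponential of the square of a centred sum, which is sub-Gaussian and whose
square is linearized by an auxiliary Gaussian variable.
-/

open ProbabilityTheory Real

section Entropy

variable {α : Type*} [MeasurableSpace α] {μ ν : Measure α}

lemma relEntropy_lt_top_iff [SigmaFinite μ] [SigmaFinite ν] :
    relEntropy μ ν < ⊤ ↔ μ ≪ ν ∧ Integrable (llr μ ν) μ := by
  rw [← and_congr_right (integrable_rnDeriv_mul_log_iff (μ := μ) (ν := ν)), relEntropy]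
  split_ifs with h <;> simp [h]

lemma toReal_relEntropy [SigmaFinite μ] [SigmaFinite ν] (h : relEntropy μ ν < ⊤) :
    (relEntropy μ ν).toReal = ∫ x, llr μ ν x ∂μ := by
  obtain ⟨hac, hint⟩ := relEntropy_lt_top_iff.1 h
  rw [relEntropy, if_pos ⟨hac, (integrable_rnDeriv_mul_log_iff hac).2 hint⟩, EReal.toReal_coe,
    integral_rnDeriv_mul_log hac]

/- Donsker–Varadhan: Gibbs' inequality for `μ` against the exponential tilt of `ν` by `f`. -/
theorem integral_le_relEntropy_add_log_integral_exp [IsProbabilityMeasure μ] [SigmaFinite ν]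
    (h : relEntropy μ ν < ⊤) {f : α → ℝ} (hf : Integrable f μ)
    (hexp : Integrable (fun x => exp (f x)) ν) :
    ∫ x, f x ∂μ ≤ (relEntropy μ ν).toReal + log (∫ x, exp (f x) ∂ν) := by
  obtain ⟨hac, hint⟩ := relEntropy_lt_top_iff.1 h
  have : NeZero ν := ⟨fun h0 => IsProbabilityMeasure.ne_zero μ <|
    Measure.absolutelyContinuous_zero_iff.1 (h0 ▸ hac)⟩
  have := isProbabilityMeasure_tilted hexp
  have hgibbs : 0 ≤ ∫ x, llr μ (ν.tilted f) x ∂μ := by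
    simpa using InformationTheory.integral_llr_add_sub_measure_univ_nonneg
      (hac.trans (absolutelyContinuous_tilted hexp))
      (integrable_llr_tilted_right hac hf hint hexp)
  rw [integral_llr_tilted_right hac hf hexp hint] at hgibbs
  rw [toReal_relEntropy h]
  linarith

lemma toReal_relEntropy_nonneg [IsProbabilityMeasure μ] [IsProbabilityMeasure ν]
    (h : relEntropy μ ν < ⊤) : 0 ≤ (relEntropy μ ν).toReal := by
  simpa using integral_le_relEntropy_add_log_integral_exp h (f := 0)
    (integrable_zero _ _ _) (by simp)

end Entropy

section Subgaussian

lemma integral_exp_mul_gaussianReal (s : ℝ) :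
    ∫ g, exp (s * g) ∂(gaussianReal 0 1) = exp (s ^ 2 / 2) := by
  simpa [mgf] using mgf_gaussianReal (p := gaussianReal 0 1) (X := id) (μ := 0) (v := 1) (by simp) s

lemma integral_exp_mul_sq_gaussianReal {b : ℝ} (hb : b < 1 / 2) :
    ∫ g, exp (b * g ^ 2) ∂(gaussianReal 0 1) = (√(1 - 2 * b))⁻¹ := by
  have hdensity (g : ℝ) : gaussianPDFReal 0 1 g • exp (b * g ^ 2)
      = (√(2 * π))⁻¹ * exp (-(1 / 2 - b) * g ^ 2) := by
    simp only [gaussianPDFReal, smul_eq_mul, mul_assoc, ← exp_add, sub_zero, NNReal.coe_one,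
      mul_one]
    ring_nf
  have hpos : 0 < 1 - 2 * b := by linarith
  rw [integral_gaussianReal_eq_integral_smul one_ne_zero]
  simp_rw [hdensity]
  rw [integral_const_mul, integral_gaussian, ← sqrt_inv, ← sqrt_inv, ← sqrt_mul (by positivity)]
  congr 1
  field_simp

lemma integrable_exp_mul_sq_gaussianReal {b : ℝ} (hb : b < 1 / 2) :
    Integrable (fun g => exp (b * g ^ 2)) (gaussianReal 0 1) := by
  refine .of_integral_ne_zero ?_
  rw [integral_exp_mul_sq_gaussianReal hb]
  have : 0 < 1 - 2 * b := by linarith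
  positivity

/- Linearization: `exp (a Z²)` is the Gaussian average of `exp (√(2a) g Z)`, so Tonelli reduces
the left side to the moment generating function of `Z`. -/
theorem integral_exp_mul_sq_le_of_hasSubgaussianMGF {Ω : Type*} [MeasurableSpace Ω]
    {P : Measure Ω} [SFinite P] {Z : Ω → ℝ} {σ : NNReal} (hZ : HasSubgaussianMGF Z σ P) {a : ℝ}
    (ha : 0 ≤ a) (haσ : 2 * (a * σ) < 1) :
    ∫ ω, exp (a * Z ω ^ 2) ∂P ≤ (√(1 - 2 * (a * σ)))⁻¹ := by
  have hlin (z : ℝ) : exp (a * z ^ 2) = ∫ g, exp (√(2 * a) * g * z) ∂(gaussianReal 0 1) := by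
    simp_rw [mul_right_comm _ _ z]
    rw [integral_exp_mul_gaussianReal, mul_pow, sq_sqrt (by positivity)]
    ring_nf
  have hmgf (g : ℝ) : ∫⁻ ω, ENNReal.ofReal (exp (√(2 * a) * g * Z ω)) ∂P
      ≤ ENNReal.ofReal (exp (a * σ * g ^ 2)) := by
    rw [← ofReal_integral_eq_lintegral_ofReal (hZ.integrable_exp_mul _)
      (.of_forall fun _ => (exp_pos _).le)]
    refine ENNReal.ofReal_le_ofReal ((hZ.mgf_le _).trans_eq ?_)
    rw [mul_pow, sq_sqrt (by positivity)]
    ring_nf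
  rw [integral_eq_lintegral_of_nonneg_ae (.of_forall fun _ => (exp_pos _).le)
    (by have := hZ.aestronglyMeasurable; fun_prop)]
  refine ENNReal.toReal_le_of_le_ofReal (by positivity) ?_
  calc ∫⁻ ω, ENNReal.ofReal (exp (a * Z ω ^ 2)) ∂P
      = ∫⁻ ω, ∫⁻ g, ENNReal.ofReal (exp (√(2 * a) * g * Z ω)) ∂(gaussianReal 0 1) ∂P := by
        refine lintegral_congr fun ω => ?_
        rw [hlin, ofReal_integral_eq_lintegral_ofReal _ (.of_forall fun _ => (exp_pos _).le)]
        simpa only [mul_right_comm _ _ (Z ω)] using integrable_exp_mul_gaussianReal _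
    _ = ∫⁻ g, ∫⁻ ω, ENNReal.ofReal (exp (√(2 * a) * g * Z ω)) ∂P ∂(gaussianReal 0 1) := by
        have := hZ.aemeasurable
        exact lintegral_lintegral_swap (by fun_prop)
    _ ≤ ∫⁻ g, ENNReal.ofReal (exp (a * σ * g ^ 2)) ∂(gaussianReal 0 1) := lintegral_mono hmgf
    _ = ENNReal.ofReal (√(1 - 2 * (a * σ)))⁻¹ := by
        rw [← ofReal_integral_eq_lintegral_ofReal
          (integrable_exp_mul_sq_gaussianReal (by linarith)) (.of_forall fun _ => (exp_pos _).le),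
          integral_exp_mul_sq_gaussianReal (by linarith)]

end Subgaussian

lemma abs_sum_le_card_mul {ι : Type*} {s : Finset ι} {f : ι → ℝ} {M : ℝ} (hM : ∀ i, |f i| ≤ M) :
    |∑ i ∈ s, f i| ≤ s.card * M :=
  (Finset.abs_sum_le_sum_abs _ _).trans <|
    (Finset.sum_le_card_nsmul _ _ M fun i _ => hM i).trans_eq (nsmul_eq_mul _ _)

section ExponentialMoment

variable {X Y I J : Type*} [MeasurableSpace X] [MeasurableSpace Y] [Fintype I] [Fintype J]

lemma integrable_of_abs_le {P : Measure X} [IsFiniteMeasure P] {f : X → ℝ} (hf : Measurable f)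
    {M : ℝ} (hM : ∀ x, |f x| ≤ M) : Integrable f P :=
  .of_bound hf.aestronglyMeasurable M (.of_forall hM)

lemma integrable_exp_of_le {P : Measure X} [IsFiniteMeasure P] {f : X → ℝ} (hf : Measurable f)
    {M : ℝ} (hM : ∀ x, f x ≤ M) : Integrable (fun x => exp (f x)) P :=
  integrable_of_abs_le hf.exp fun x => by rw [abs_exp]; exact exp_le_exp.2 (hM x)

lemma integral_exp_sum_pi (μ : Measure X) [SigmaFinite μ] (f : X → ℝ) :
    ∫ x : I → X, exp (∑ i, f (x i)) ∂(Measure.pi fun _ => μ)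
      = (∫ x, exp (f x) ∂μ) ^ Fintype.card I := by
  simp_rw [exp_sum]
  exact integral_fintype_prod_eq_pow (E := X) (μ := μ) fun x => exp (f x)

lemma hasSubgaussianMGF_sum_pi {μ : Measure X} [IsProbabilityMeasure μ] {u : X → ℝ}
    (hu : Measurable u) {M : NNReal} (hM : ∀ x, |u x| ≤ M) (h0 : ∫ x, u x ∂μ = 0) :
    HasSubgaussianMGF (fun x : I → X => ∑ i, u (x i)) (Fintype.card I * M ^ 2)
      (Measure.pi fun _ => μ) := by
  have hcoord (i : I) : HasSubgaussianMGF (fun x : I → X => u (x i)) (M ^ 2)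
      (Measure.pi fun _ => μ) := by
    have := hasSubgaussianMGF_of_mem_Icc_of_integral_eq_zero (μ := Measure.pi fun _ : I => μ)
      (X := fun x => u (x i)) (a := -M) (b := M)
      (hu.comp (measurable_pi_apply i)).aemeasurable
      (.of_forall fun x => abs_le.1 (hM (x i)))
      (by rw [integral_comp_eval (μ := fun _ : I => μ) hu.aestronglyMeasurable, h0])
    convert this using 1
    rw [sub_neg_eq_add, ← two_mul, nnnorm_mul]
    simp
  simpa using HasSubgaussianMGF.sum_of_iIndepFun
    (iIndepFun_pi (μ := fun _ : I => μ) (X := fun _ => u) fun _ => hu.aemeasurable)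
    (s := Finset.univ) fun i _ => hcoord i

lemma integral_exp_mul_sq_sum_pi_le {μ : Measure X} [IsProbabilityMeasure μ] {u : X → ℝ}
    (hu : Measurable u) {M : ℝ} (hM : ∀ x, |u x| ≤ M) (h0 : ∫ x, u x ∂μ = 0) {n : ℕ}
    (hI : Fintype.card I ≤ n) {c : ℝ} (hc : |c| * (n * M) ≤ 1 / 2) :
    ∫ x : I → X, exp (n * (c * ∑ i, u (x i)) ^ 2) ∂(Measure.pi fun _ => μ) ≤ √2 := by
  obtain ⟨x₀⟩ := nonempty_of_isProbabilityMeasure μ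
  lift M to NNReal using (abs_nonneg _).trans (hM x₀)
  have hvar : 4 * (n * c ^ 2 * (Fintype.card I * M ^ 2)) ≤ 1 :=
    calc 4 * (n * c ^ 2 * (Fintype.card I * M ^ 2)) ≤ 4 * (n * c ^ 2 * (n * M ^ 2)) := by gcongr
      _ = (2 * (|c| * (n * M))) ^ 2 := by rw [← sq_abs c]; ring
      _ ≤ 1 := pow_le_one₀ (by positivity) (by linarith)
  simp_rw [mul_pow, ← mul_assoc]
  refine (integral_exp_mul_sq_le_of_hasSubgaussianMGF (hasSubgaussianMGF_sum_pi hu hM h0)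
    (by positivity) ?_).trans ?_
  · push_cast
    linarith
  · push_cast
    rw [← sqrt_inv]
    refine sqrt_le_sqrt (inv_le_of_inv_le₀ two_pos ?_)
    linarith

lemma integral_exp_le_exp_integral_sq {μ : Measure X} [IsProbabilityMeasure μ] {f : X → ℝ}
    (hf : Measurable f) (hf1 : ∀ x, |f x| ≤ 1) (h0 : ∫ x, f x ∂μ = 0) :
    ∫ x, exp (f x) ∂μ ≤ exp (∫ x, f x ^ 2 ∂μ) := by
  have hint := integrable_of_abs_le (P := μ) hf hf1
  have hint_sq : Integrable (fun x => f x ^ 2) μ :=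
    integrable_of_abs_le (hf.pow_const 2) fun x => by
      rw [abs_pow]; exact pow_le_one₀ (abs_nonneg _) (hf1 x)
  calc ∫ x, exp (f x) ∂μ ≤ ∫ x, ((1 + f x) + f x ^ 2) ∂μ := by
        refine integral_mono (integrable_exp_of_le hf fun x => (abs_le.1 (hf1 x)).2)
          (((integrable_const 1).add hint).add hint_sq) fun x => ?_
        linarith [(abs_le.1 (abs_exp_sub_one_sub_id_le (hf1 x))).2]
    _ = ∫ x, f x ^ 2 ∂μ + 1 := by
        rw [integral_add (by fun_prop) hint_sq, integral_add (integrable_const 1) hint, h0]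
        simp [add_comm]
    _ ≤ exp (∫ x, f x ^ 2 ∂μ) := add_one_le_exp _

lemma integral_exp_sum_pi_le_integral_exp_mul_sq {μ : Measure X} [IsProbabilityMeasure μ]
    {f : X → ℝ} (hf : Measurable f) (hf1 : ∀ x, |f x| ≤ 1) (h0 : ∫ x, f x ∂μ = 0) {n : ℕ}
    (hI : Fintype.card I ≤ n) :
    ∫ x : I → X, exp (∑ i, f (x i)) ∂(Measure.pi fun _ => μ) ≤ ∫ x, exp (n * f x ^ 2) ∂μ := by
  have hsq (x : X) : f x ^ 2 ≤ 1 := (sq_le_one_iff_abs_le_one _).2 (hf1 x)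
  have hint : Integrable (fun x => n * f x ^ 2) μ :=
    (integrable_of_abs_le (hf.pow_const 2) fun x => by rw [abs_sq]; exact hsq x).const_mul _
  calc ∫ x : I → X, exp (∑ i, f (x i)) ∂(Measure.pi fun _ => μ)
      ≤ exp (∫ x, f x ^ 2 ∂μ) ^ Fintype.card I := by
        rw [integral_exp_sum_pi]
        gcongr
        exact integral_exp_le_exp_integral_sq hf hf1 h0
    _ ≤ exp (∫ x, n * f x ^ 2 ∂μ) := by
        rw [← exp_nat_mul, integral_const_mul]
        gcongr
    _ ≤ ∫ x, exp (n * f x ^ 2) ∂μ :=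
        convexOn_exp.map_integral_le continuous_exp.continuousOn isClosed_univ (by simp) hint <|
          integrable_exp_of_le (M := n) (by fun_prop) fun x =>
            mul_le_of_le_one_right (by positivity) (hsq x)

section Bipartite

variable {μ : Measure X} {h : X → Y → ℝ} {M : ℝ} {n : ℕ} {c : ℝ}

lemma abs_mul_sum_le {f : J → ℝ} (hM : ∀ j, |f j| ≤ M) (hM0 : 0 ≤ M) (hJ : Fintype.card J ≤ n) :
    |c * ∑ j, f j| ≤ |c| * (n * M) := by
  rw [abs_mul]
  gcongr
  refine (abs_sum_le_card_mul hM).trans ?_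
  rw [Finset.card_univ]
  gcongr

lemma integral_exp_sum_sum_pi_left_le [IsProbabilityMeasure μ]
    (hm : Measurable (Function.uncurry h)) (hM : ∀ x y, |h x y| ≤ M)
    (hleft : ∀ y, ∫ x, h x y ∂μ = 0) (hI : Fintype.card I ≤ n) (hJ : Fintype.card J ≤ n)
    (hc : |c| * (n * M) ≤ 1) (y : J → Y) :
    ∫ x : I → X, exp (c * ∑ i, ∑ j, h (x i) (y j)) ∂(Measure.pi fun _ => μ)
      ≤ ∫ x, exp (n * (c * ∑ j, h x (y j)) ^ 2) ∂μ := by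
  have hm_row (y : Y) : Measurable fun x => h x y := hm.of_uncurry_right
  have hmean : ∫ x, c * ∑ j, h x (y j) ∂μ = 0 := by
    rw [integral_const_mul, integral_finsetSum (f := fun j x => h x (y j)) _ fun j _ =>
      integrable_of_abs_le (hm_row _) fun x => hM x (y j)]
    simp [hleft]
  have hbound (x : X) : |c * ∑ j, h x (y j)| ≤ 1 := by
    rcases isEmpty_or_nonempty J with _ | ⟨⟨j₀⟩⟩
    · simp
    · exact (abs_mul_sum_le (fun j => hM x (y j)) ((abs_nonneg _).trans (hM x (y j₀))) hJ).trans hc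
  have hsum (x : I → X) : c * ∑ i, ∑ j, h (x i) (y j) = ∑ i, c * ∑ j, h (x i) (y j) :=
    Finset.mul_sum ..
  simp_rw [hsum]
  exact integral_exp_sum_pi_le_integral_exp_mul_sq (by fun_prop) hbound hmean hI

theorem integral_exp_sum_sum_prod_pi_le {ν : Measure Y} [IsProbabilityMeasure μ]
    [IsProbabilityMeasure ν] (hm : Measurable (Function.uncurry h)) (hM : ∀ x y, |h x y| ≤ M)
    (hleft : ∀ y, ∫ x, h x y ∂μ = 0) (hright : ∀ x, ∫ y, h x y ∂ν = 0)
    (hI : Fintype.card I ≤ n) (hJ : Fintype.card J ≤ n) (hc : |c| * (n * M) ≤ 1 / 2) :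
    ∫ p : (I → X) × (J → Y), exp (c * ∑ i, ∑ j, h (p.1 i) (p.2 j))
      ∂((Measure.pi fun _ => μ).prod (Measure.pi fun _ => ν)) ≤ √2 := by
  obtain ⟨x₀⟩ := nonempty_of_isProbabilityMeasure μ
  obtain ⟨y₀⟩ := nonempty_of_isProbabilityMeasure ν
  have hM0 : 0 ≤ M := (abs_nonneg _).trans (hM x₀ y₀)
  have hc1 : |c| * (n * M) ≤ 1 := hc.trans (by norm_num)
  have hrow (x : X) (y : J → Y) : |c * ∑ j, h x (y j)| ≤ 1 :=
    (abs_mul_sum_le (fun j => hM x (y j)) hM0 hJ).trans hc1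
  have hexp : Integrable (fun p : (I → X) × (J → Y) => exp (c * ∑ i, ∑ j, h (p.1 i) (p.2 j)))
      ((Measure.pi fun _ => μ).prod (Measure.pi fun _ => ν)) := by
    refine integrable_exp_of_le (M := Fintype.card I * 1) (by fun_prop) fun p => ?_
    rw [Finset.mul_sum]
    exact (le_abs_self _).trans (abs_sum_le_card_mul fun i => hrow _ _)
  have hexp_sq : Integrable (fun q : X × (J → Y) => exp (n * (c * ∑ j, h q.1 (q.2 j)) ^ 2))
      (μ.prod (Measure.pi fun _ => ν)) :=
    integrable_exp_of_le (M := n) (by fun_prop) fun q =>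
      mul_le_of_le_one_right (by positivity) ((sq_le_one_iff_abs_le_one _).2 (hrow _ _))
  calc ∫ p : (I → X) × (J → Y), exp (c * ∑ i, ∑ j, h (p.1 i) (p.2 j))
        ∂((Measure.pi fun _ => μ).prod (Measure.pi fun _ => ν))
      = ∫ y : J → Y, ∫ x : I → X, exp (c * ∑ i, ∑ j, h (x i) (y j))
          ∂(Measure.pi fun _ => μ) ∂(Measure.pi fun _ => ν) := integral_prod_symm _ hexp
    _ ≤ ∫ y : J → Y, ∫ x, exp (n * (c * ∑ j, h x (y j)) ^ 2) ∂μ ∂(Measure.pi fun _ => ν) :=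
        integral_mono hexp.integral_prod_right hexp_sq.integral_prod_right
          fun y => integral_exp_sum_sum_pi_left_le hm hM hleft hI hJ hc1 y
    _ = ∫ x, ∫ y : J → Y, exp (n * (c * ∑ j, h x (y j)) ^ 2) ∂(Measure.pi fun _ => ν) ∂μ :=
        (integral_integral_swap hexp_sq).symm
    _ ≤ ∫ _, √2 ∂μ :=
        integral_mono hexp_sq.integral_prod_left (integrable_const _) fun x =>
          integral_exp_mul_sq_sum_pi_le hm.of_uncurry_left (hM x) (hright x) hJ hc
    _ = √2 := by simp

end Bipartite

end ExponentialMoment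

section Decoupling

variable {ι : Type*} [Fintype ι]

lemma four_mul_card_filter_mem_and_notMem [DecidableEq ι] {i j : ι} (hij : i ≠ j) :
    4 * (Finset.univ.filter fun S : Finset ι => i ∈ S ∧ j ∉ S).card = 2 ^ Fintype.card ι := by
  have hIcc : (Finset.univ.filter fun S : Finset ι => i ∈ S ∧ j ∉ S) = Finset.Icc {i} {j}ᶜ := by
    ext S
    simp [Finset.subset_compl_comm (t := {j})]
  have hcard : Fintype.card ι = Fintype.card ι - 1 - 1 + 2 := by
    have := Fintype.one_lt_card_iff.2 ⟨i, j, hij⟩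
    omega
  rw [hIcc, Finset.card_Icc_finset (by simpa [eq_comm] using hij), Finset.card_compl,
    Finset.card_singleton, Finset.card_singleton]
  conv_rhs => rw [hcard, pow_add]
  ring

lemma sum_sum_compl_eq_sum_offDiag [DecidableEq ι] (a : ι → ι → ℝ) :
    4 * ∑ S : Finset ι, ∑ i ∈ S, ∑ j ∈ Sᶜ, a i j
      = 2 ^ Fintype.card ι * ∑ i, ∑ j ∈ {i}ᶜ, a i j := by
  have hfilter (S : Finset ι) : ∑ i ∈ S, ∑ j ∈ Sᶜ, a i j
      = ∑ i, ∑ j ∈ {i}ᶜ, if i ∈ S ∧ j ∉ S then a i j else 0 := by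
    rw [← Finset.sum_subset S.subset_univ (by simp +contextual)]
    refine Finset.sum_congr rfl fun i hi => ?_
    simp only [hi, true_and, ← Finset.mem_compl]
    rw [Finset.sum_ite_mem, Finset.inter_eq_right.2]
    simpa using hi
  simp_rw [hfilter]
  rw [Finset.sum_comm, Finset.mul_sum, Finset.mul_sum]
  refine Finset.sum_congr rfl fun i _ => ?_
  rw [Finset.sum_comm, Finset.mul_sum, Finset.mul_sum]
  refine Finset.sum_congr rfl fun j hj => ?_
  have hij : i ≠ j := by simpa [eq_comm] using hj
  rw [← Finset.sum_filter, Finset.sum_const, nsmul_eq_mul, ← mul_assoc]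
  congr 1
  exact_mod_cast four_mul_card_filter_mem_and_notMem hij

lemma sum_sum_eq_diag_add_average [DecidableEq ι] (a : ι → ι → ℝ) :
    ∑ i, ∑ j, a i j = ∑ i, a i i
      + 4 / 2 ^ Fintype.card ι * ∑ S : Finset ι, ∑ i ∈ S, ∑ j ∈ Sᶜ, a i j := by
  rw [div_mul_eq_mul_div, sum_sum_compl_eq_sum_offDiag, mul_div_cancel_left₀ _ (by positivity),
    ← Finset.sum_add_distrib]
  refine Finset.sum_congr rfl fun i _ => ?_
  exact Fintype.sum_eq_add_sum_compl i (a i)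

end Decoupling

section Transfer

variable {X ι : Type*} [MeasurableSpace X] [Fintype ι] {ρ : Measure X} [IsProbabilityMeasure ρ]
  {P : Measure (ι → X)} [IsProbabilityMeasure P]

section Scalar

variable {h : X → X → ℝ} {M c : ℝ}

lemma integral_exp_bipartite_pi_le [DecidableEq ι] (hm : Measurable (Function.uncurry h))
    (hM : ∀ x y, |h x y| ≤ M) (hleft : ∀ y, ∫ x, h x y ∂ρ = 0) (hright : ∀ x, ∫ y, h x y ∂ρ = 0)
    (hc : |c| * (Fintype.card ι * M) ≤ 1 / 2) (S : Finset ι) :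
    ∫ x : ι → X, exp (c * ∑ i ∈ S, ∑ j ∈ Sᶜ, h (x i) (x j)) ∂(Measure.pi fun _ => ρ) ≤ √2 := by
  have hcard (p : ι → Prop) [Fintype (Subtype p)] : Fintype.card (Subtype p) ≤ Fintype.card ι :=
    Fintype.card_le_of_injective _ Subtype.val_injective
  have hsplit (x : ι → X) : ∑ i ∈ S, ∑ j ∈ Sᶜ, h (x i) (x j)
      = ∑ i : {i // i ∈ S}, ∑ j : {j // j ∉ S}, h (x i) (x j) := by
    rw [Finset.sum_subtype S (p := (· ∈ S)) (F := inferInstance) (by simp)]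
    simp_rw [Finset.sum_subtype Sᶜ (p := (· ∉ S)) (F := inferInstance) (by simp)]
  simp_rw [hsplit]
  refine ((measurePreserving_piEquivPiSubtypeProd (fun _ : ι => ρ) (· ∈ S)).integral_comp'
    fun p => exp (c * ∑ i, ∑ j, h (p.1 i) (p.2 j))).trans_le ?_
  convert integral_exp_sum_sum_prod_pi_le hm hM hleft hright (hcard (· ∈ S)) (hcard (· ∉ S)) hc

lemma integral_abs_bipartite_le [DecidableEq ι] (hm : Measurable (Function.uncurry h))
    (hM : ∀ x y, |h x y| ≤ M) (hleft : ∀ y, ∫ x, h x y ∂ρ = 0) (hright : ∀ x, ∫ y, h x y ∂ρ = 0)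
    (hc : |c| * (Fintype.card ι * M) ≤ 1 / 2) (hH : relEntropy P (Measure.pi fun _ => ρ) < ⊤)
    (S : Finset ι) :
    ∫ x, |c * ∑ i ∈ S, ∑ j ∈ Sᶜ, h (x i) (x j)| ∂P
      ≤ (relEntropy P (Measure.pi fun _ => ρ)).toReal + log (2 * √2) := by
  set F : (ι → X) → ℝ := fun x => ∑ i ∈ S, ∑ j ∈ Sᶜ, h (x i) (x j)
  have hF : Measurable F := by fun_prop
  have hbound (b : ℝ) (x : ι → X) : |b * F x| ≤ |b| * (S.card * (Sᶜ.card * M)) := by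
    rw [abs_mul]
    gcongr
    exact abs_sum_le_card_mul fun _ => abs_sum_le_card_mul fun _ => hM _ _
  have hexp (b : ℝ) : Integrable (fun x => exp (b * F x)) (Measure.pi fun _ => ρ) :=
    integrable_exp_of_le (by fun_prop) fun x => (le_abs_self _).trans (hbound b x)
  have hexp_abs : Integrable (fun x => exp |c * F x|) (Measure.pi fun _ => ρ) :=
    integrable_exp_of_le (by fun_prop) (hbound c)
  refine (integral_le_relEntropy_add_log_integral_exp hH
    (integrable_of_abs_le (by fun_prop) (hbound c)).abs hexp_abs).trans ?_
  gcongr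
  · exact integral_exp_pos hexp_abs
  calc ∫ x, exp |c * F x| ∂(Measure.pi fun _ => ρ)
      ≤ ∫ x, (exp (c * F x) + exp (-c * F x)) ∂(Measure.pi fun _ => ρ) :=
        integral_mono hexp_abs ((hexp c).add (hexp (-c))) fun x => by
          simpa only [neg_mul] using exp_abs_le (c * F x)
    _ = ∫ x, exp (c * F x) ∂(Measure.pi fun _ => ρ)
        + ∫ x, exp (-c * F x) ∂(Measure.pi fun _ => ρ) := integral_add (hexp c) (hexp (-c))
    _ ≤ √2 + √2 := add_le_add (integral_exp_bipartite_pi_le hm hM hleft hright hc S)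
        (integral_exp_bipartite_pi_le hm hM hleft hright (by rwa [abs_neg]) S)
    _ = 2 * √2 := (two_mul _).symm

lemma log_two_mul_sqrt_two_le : log (2 * √2) ≤ 11 / 10 := by
  rw [log_mul two_ne_zero (by positivity), log_sqrt two_pos.le]
  linarith [log_two_lt_d9]

lemma integral_abs_sum_sum_le_card_mul_add [DecidableEq ι] (hm : Measurable (Function.uncurry h))
    (hM : ∀ x y, |h x y| ≤ M) {A : ℝ}
    (hA : ∀ S : Finset ι, ∫ x, |∑ i ∈ S, ∑ j ∈ Sᶜ, h (x i) (x j)| ∂P ≤ A) :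
    ∫ x, |∑ i, ∑ j, h (x i) (x j)| ∂P ≤ Fintype.card ι * M + 4 * A := by
  have hint (S : Finset ι) : Integrable (fun x => |∑ i ∈ S, ∑ j ∈ Sᶜ, h (x i) (x j)|) P :=
    (integrable_of_abs_le (by fun_prop) fun x =>
      abs_sum_le_card_mul fun _ => abs_sum_le_card_mul fun _ => hM _ _).abs
  have hpointwise (x : ι → X) : |∑ i, ∑ j, h (x i) (x j)| ≤ Fintype.card ι * M
      + 4 / 2 ^ Fintype.card ι * ∑ S : Finset ι, |∑ i ∈ S, ∑ j ∈ Sᶜ, h (x i) (x j)| := by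
    rw [sum_sum_eq_diag_add_average]
    refine (abs_add_le _ _).trans (add_le_add (abs_sum_le_card_mul fun _ => hM _ _) ?_)
    rw [abs_mul, abs_of_nonneg (by positivity)]
    gcongr
    exact Finset.abs_sum_le_sum_abs _ _
  have hsum := integrable_finsetSum Finset.univ fun S _ => hint S
  calc ∫ x, |∑ i, ∑ j, h (x i) (x j)| ∂P
      ≤ ∫ x, (Fintype.card ι * M + 4 / 2 ^ Fintype.card ι *
          ∑ S : Finset ι, |∑ i ∈ S, ∑ j ∈ Sᶜ, h (x i) (x j)|) ∂P :=
        integral_mono_of_nonneg (.of_forall fun _ => abs_nonneg _)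
          ((integrable_const _).add (hsum.const_mul _)) (.of_forall hpointwise)
    _ = Fintype.card ι * M + 4 / 2 ^ Fintype.card ι *
          ∑ S : Finset ι, ∫ x, |∑ i ∈ S, ∑ j ∈ Sᶜ, h (x i) (x j)| ∂P := by
        rw [integral_add (integrable_const _) (hsum.const_mul _), integral_const,
          integral_const_mul, integral_finsetSum _ fun S _ => hint S]
        simp
    _ ≤ Fintype.card ι * M + 4 / 2 ^ Fintype.card ι * ∑ _S : Finset ι, A := by
        gcongr with S
        exact hA S
    _ = Fintype.card ι * M + 4 * A := by
        rw [Finset.sum_const, Finset.card_univ, Fintype.card_finset, nsmul_eq_mul]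
        push_cast
        field_simp

theorem integral_abs_sum_sum_le (hm : Measurable (Function.uncurry h)) (hM : ∀ x y, |h x y| ≤ M)
    (hleft : ∀ y, ∫ x, h x y ∂ρ = 0) (hright : ∀ x, ∫ y, h x y ∂ρ = 0)
    (hH : relEntropy P (Measure.pi fun _ => ρ) < ⊤) :
    ∫ x, |∑ i, ∑ j, h (x i) (x j)| ∂P
      ≤ 10 * (Fintype.card ι * M) * ((relEntropy P (Measure.pi fun _ => ρ)).toReal + 1) := by
  obtain ⟨x₀⟩ := nonempty_of_isProbabilityMeasure ρ
  have hM0 : 0 ≤ M := (abs_nonneg _).trans (hM x₀ x₀)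
  set H := (relEntropy P (Measure.pi fun _ => ρ)).toReal
  set b := Fintype.card ι * M with hb_def
  rcases (show 0 ≤ b by positivity).eq_or_lt' with hb | hb
  · have hzero (x : ι → X) : ∑ i, ∑ j, h (x i) (x j) = 0 := abs_nonpos_iff.1 <|
      (abs_sum_le_card_mul fun _ => abs_sum_le_card_mul fun _ => hM _ _).trans_eq <| by
        rw [Finset.card_univ, ← hb_def, hb, mul_zero]
    simp [hzero, hb]
  have hbip (S : Finset ι) :
      ∫ x, |∑ i ∈ S, ∑ j ∈ Sᶜ, h (x i) (x j)| ∂P ≤ 2 * b * (H + 11 / 10) := by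
    have hscaled := integral_abs_bipartite_le hm hM hleft hright (c := (2 * b)⁻¹)
      (by rw [abs_of_pos (by positivity), mul_inv, inv_mul_cancel_right₀ hb.ne', one_div]) hH S
    simp_rw [abs_mul, abs_of_pos (show 0 < (2 * b)⁻¹ by positivity)] at hscaled
    rw [integral_const_mul, inv_mul_le_iff₀ (by positivity)] at hscaled
    exact hscaled.trans (by gcongr; exact log_two_mul_sqrt_two_le)
  have hH0 : 0 ≤ b * H := mul_nonneg hb.le (toReal_relEntropy_nonneg hH)
  linarith [integral_abs_sum_sum_le_card_mul_add hm hM hbip]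

end Scalar

lemma norm_le_sum_abs {κ : Type*} [Fintype κ] (v : EuclideanSpace ℝ κ) : ‖v‖ ≤ ∑ k, |v k| := by
  rw [EuclideanSpace.norm_eq]
  refine sqrt_le_iff.2 ⟨by positivity, ?_⟩
  exact Finset.sum_sq_le_sq_sum_of_nonneg fun _ _ => abs_nonneg _

theorem integral_norm_sum_sum_le {κ : Type*} [Fintype κ]
    {h : X → X → EuclideanSpace ℝ κ} {M : ℝ} (hm : Measurable (Function.uncurry h))
    (hM : ∀ x y, ‖h x y‖ ≤ M) (hleft : ∀ y, ∫ x, h x y ∂ρ = 0) (hright : ∀ x, ∫ y, h x y ∂ρ = 0)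
    (hH : relEntropy P (Measure.pi fun _ => ρ) < ⊤) :
    ∫ x, ‖∑ i, ∑ j, h (x i) (x j)‖ ∂P
      ≤ Fintype.card κ * (10 * (Fintype.card ι * M))
        * ((relEntropy P (Measure.pi fun _ => ρ)).toReal + 1) := by
  have hm_coord (k : κ) : Measurable (Function.uncurry fun x y => h x y k) :=
    (EuclideanSpace.proj (𝕜 := ℝ) k).continuous.measurable.comp hm
  have hM_coord (k : κ) (x y : X) : |h x y k| ≤ M := (PiLp.norm_apply_le _ k).trans (hM x y)
  have hint_coord (k : κ) : Integrable (fun x => |∑ i, ∑ j, h (x i) (x j) k|) P :=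
    (integrable_of_abs_le (by have := hm_coord k; fun_prop) fun x =>
      abs_sum_le_card_mul fun _ => abs_sum_le_card_mul fun _ => hM_coord k _ _).abs
  have hcentred {f : X → EuclideanSpace ℝ κ} (hf : Integrable f ρ) (h0 : ∫ x, f x ∂ρ = 0) (k : κ) :
      ∫ x, f x k ∂ρ = 0 := by
    simpa [h0] using (EuclideanSpace.proj (𝕜 := ℝ) k).integral_comp_comm hf
  have hbounded {f : X → EuclideanSpace ℝ κ} (hf : Measurable f) (hfM : ∀ x, ‖f x‖ ≤ M) :
      Integrable f ρ := .of_bound hf.aestronglyMeasurable M (.of_forall hfM)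
  calc ∫ x, ‖∑ i, ∑ j, h (x i) (x j)‖ ∂P ≤ ∫ x, ∑ k, |∑ i, ∑ j, h (x i) (x j) k| ∂P := by
        refine integral_mono_of_nonneg (.of_forall fun _ => norm_nonneg _)
          (integrable_finsetSum _ fun k _ => hint_coord k) (.of_forall fun x => ?_)
        simpa using norm_le_sum_abs (∑ i, ∑ j, h (x i) (x j))
    _ = ∑ k, ∫ x, |∑ i, ∑ j, h (x i) (x j) k| ∂P := integral_finsetSum _ fun k _ => hint_coord k
    _ ≤ ∑ _k : κ, 10 * (Fintype.card ι * M)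
          * ((relEntropy P (Measure.pi fun _ => ρ)).toReal + 1) :=
        Finset.sum_le_sum fun k _ => integral_abs_sum_sum_le (hm_coord k) (hM_coord k)
          (fun y => hcentred (hbounded hm.of_uncurry_right (hM · y)) (hleft y) k)
          (fun x => hcentred (hbounded hm.of_uncurry_left (hM x)) (hright x) k) hH
    _ = _ := by
        rw [Finset.sum_const, Finset.card_univ, nsmul_eq_mul, mul_assoc (Fintype.card κ : ℝ)]

end Transfer

section DoubleCentring

variable {X Y E : Type*} [MeasurableSpace X] [MeasurableSpace Y] [NormedAddCommGroup E]
  [NormedSpace ℝ E] {μ : Measure X} {ν : Measure Y} {G : X → Y → E} {M : ℝ}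

/-- The Hoeffding projection of `G` onto the kernels which integrate to zero in each variable:
the mean of `G` in each variable is subtracted, and the total mean is added back. -/
noncomputable def doublyCentered (μ : Measure X) (ν : Measure Y) (G : X → Y → E) (x : X) (y : Y) :
    E :=
  G x y - ∫ y', G x y' ∂ν - ∫ x', G x' y ∂μ + ∫ x', ∫ y', G x' y' ∂ν ∂μ

lemma stronglyMeasurable_doublyCentered [SFinite μ] [SFinite ν]
    (hG : StronglyMeasurable (Function.uncurry G)) :
    StronglyMeasurable (Function.uncurry (doublyCentered μ ν G)) :=
  ((hG.sub (hG.integral_prod_right'.comp_measurable measurable_fst)).sub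
    (hG.integral_prod_left'.comp_measurable measurable_snd)).add stronglyMeasurable_const

lemma norm_integral_le_of_forall_norm_le [IsProbabilityMeasure μ] {f : X → E}
    (hf : ∀ x, ‖f x‖ ≤ M) : ‖∫ x, f x ∂μ‖ ≤ M := by
  simpa using norm_integral_le_of_norm_le_const (μ := μ) (.of_forall hf)

lemma norm_doublyCentered_le [IsProbabilityMeasure μ] [IsProbabilityMeasure ν]
    (hM : ∀ x y, ‖G x y‖ ≤ M) (x : X) (y : Y) : ‖doublyCentered μ ν G x y‖ ≤ 4 * M := by
  have hrow (x : X) : ‖∫ y, G x y ∂ν‖ ≤ M := norm_integral_le_of_forall_norm_le (hM x)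
  have hcol : ‖∫ x, G x y ∂μ‖ ≤ M := norm_integral_le_of_forall_norm_le (hM · y)
  have htotal : ‖∫ x, ∫ y, G x y ∂ν ∂μ‖ ≤ M := norm_integral_le_of_forall_norm_le hrow
  calc ‖doublyCentered μ ν G x y‖
      ≤ ‖G x y‖ + ‖∫ y', G x y' ∂ν‖ + ‖∫ x', G x' y ∂μ‖ + ‖∫ x', ∫ y', G x' y' ∂ν ∂μ‖ :=
        norm_add_le_of_le (norm_sub_le_of_le (norm_sub_le _ _) le_rfl) le_rfl
    _ ≤ 4 * M := by linarith [hM x y, hrow x]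

lemma integral_doublyCentered_left [CompleteSpace E] [IsProbabilityMeasure μ] [SFinite ν]
    (hG : Integrable (Function.uncurry G) (μ.prod ν)) {y : Y}
    (hy : Integrable (fun x => G x y) μ) : ∫ x, doublyCentered μ ν G x y ∂μ = 0 := by
  have hrow : Integrable (fun x => ∫ y, G x y ∂ν) μ := hG.integral_prod_left
  simp only [doublyCentered]
  rw [integral_add (by fun_prop) (integrable_const _), integral_sub (by fun_prop)
    (integrable_const _), integral_sub hy hrow]
  simp

lemma integral_doublyCentered_right [CompleteSpace E] [SFinite μ] [IsProbabilityMeasure ν]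
    (hG : Integrable (Function.uncurry G) (μ.prod ν)) {x : X}
    (hx : Integrable (G x) ν) : ∫ y, doublyCentered μ ν G x y ∂ν = 0 := by
  have hcol : Integrable (fun y => ∫ x, G x y ∂μ) ν := hG.integral_prod_right
  simp only [doublyCentered]
  rw [integral_add (by fun_prop) (integrable_const _), integral_sub (by fun_prop) hcol,
    integral_sub hx (integrable_const _), integral_integral_swap hG]
  simp

end DoubleCentring

section Empirical

variable {d N : ℕ}

lemma integral_empiricalMeasure {E : Type*} [NormedAddCommGroup E] [NormedSpace ℝ E]
    [FiniteDimensional ℝ E] (x : Fin N → Torus d) (f : Torus d → E) :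
    ∫ z, f z ∂(empiricalMeasure d N x) = (N : ℝ)⁻¹ • ∑ i, f (x i) := by
  rw [empiricalMeasure, integral_smul_measure,
    integral_finsetSum_measure fun i _ => integrable_dirac (by simp)]
  simp

variable {G : Torus d → Torus d → EuclideanSpace ℝ (Fin d)} {ρ : Measure (Torus d)}

lemma psiDiff_empiricalMeasure (hN : 0 < N) (hG : ∀ y, Integrable (fun x => G x y) ρ)
    (x : Fin N → Torus d) :
    psiDiff d (fun μ₁ μ₂ => ∫ x, ∫ y, G x y ∂μ₂ ∂μ₁) (empiricalMeasure d N x) ρ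
      = ((N : ℝ) ^ 2)⁻¹ • ∑ i, ∑ j, doublyCentered ρ ρ G (x i) (x j) := by
  simp only [psiDiff, integral_empiricalMeasure, doublyCentered]
  rw [integral_smul, integral_finsetSum _ fun j _ => hG (x j)]
  simp only [Finset.sum_add_distrib, Finset.sum_sub_distrib, Finset.sum_const, Finset.card_univ,
    Fintype.card_fin, ← Nat.cast_smul_eq_nsmul ℝ, ← Finset.smul_sum]
  match_scalars <;> field_simp

theorem integral_norm_psiDiff_le {M : ℝ} [IsProbabilityMeasure ρ]
    {ρN : Measure (Fin N → Torus d)} [IsProbabilityMeasure ρN]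
    (hG : Measurable (Function.uncurry G)) (hM : ∀ x y, ‖G x y‖ ≤ M) (hN : 0 < N)
    (hH : relEntropy ρN (Measure.pi fun _ => ρ) < ⊤) :
    ∫ x, ‖psiDiff d (fun μ₁ μ₂ => ∫ x, ∫ y, G x y ∂μ₂ ∂μ₁) (empiricalMeasure d N x) ρ‖ ∂ρN
      ≤ 40 * d * M / N * ((relEntropy ρN (Measure.pi fun _ => ρ)).toReal + 1) := by
  have hint : Integrable (Function.uncurry G) (ρ.prod ρ) :=
    .of_bound hG.aestronglyMeasurable M (.of_forall fun p => hM p.1 p.2)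
  have hint_row (x : Torus d) : Integrable (G x) ρ :=
    .of_bound hG.of_uncurry_left.aestronglyMeasurable M (.of_forall (hM x))
  have hint_col (y : Torus d) : Integrable (fun x => G x y) ρ :=
    .of_bound hG.of_uncurry_right.aestronglyMeasurable M (.of_forall (hM · y))
  have hVstat := integral_norm_sum_sum_le
    (stronglyMeasurable_doublyCentered hG.stronglyMeasurable).measurable
    (norm_doublyCentered_le hM) (fun y => integral_doublyCentered_left hint (hint_col y))
    (fun x => integral_doublyCentered_right hint (hint_row x)) hH
  simp_rw [psiDiff_empiricalMeasure hN hint_col, norm_smul]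
  rw [integral_const_mul, norm_of_nonneg (by positivity)]
  refine (mul_le_mul_of_nonneg_left hVstat (by positivity)).trans_eq ?_
  rw [Fintype.card_fin, Fintype.card_fin]
  field_simp
  ring

end Empirical

section LipschitzTorus

variable {p : ℝ} {κ : Type*} [Fintype κ]

lemma exists_coe_eq_and_abs_eq_norm (a : AddCircle p) :
    ∃ t : ℝ, (t : AddCircle p) = a ∧ |t| = ‖a‖ := by
  obtain ⟨s, rfl⟩ := QuotientAddGroup.mk_surjective a
  refine ⟨s - round (p⁻¹ * s) * p, ?_, (AddCircle.norm_eq _).symm⟩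
  rw [← zsmul_eq_mul, AddCircle.coe_sub, AddCircle.coe_zsmul, AddCircle.coe_period, smul_zero,
    sub_zero]

lemma exists_pi_coe_eq_and_norm_eq (a : κ → AddCircle p) :
    ∃ v : κ → ℝ, (fun j => (v j : AddCircle p)) = a ∧ ‖v‖ = ‖a‖ := by
  choose v hv hnorm using fun j => exists_coe_eq_and_abs_eq_norm (a j)
  have hnnnorm (j : κ) : ‖v j‖₊ = ‖a j‖₊ := NNReal.eq (hnorm j)
  exact ⟨v, funext hv, by simp only [Pi.norm_def, hnnnorm]⟩

lemma norm_pi_addCircle_le (hp : p ≠ 0) (a : κ → AddCircle p) : ‖a‖ ≤ |p| / 2 :=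
  (pi_norm_le_iff_of_nonneg (by positivity)).2 fun _ => AddCircle.norm_le_half_period p hp

/- Both points lift to the ball of radius `|p|`, the difference of the lifts being as short as the
difference of the points. -/
theorem exists_lipschitzWith_of_contDiff_lift (hp : p ≠ 0) {F : Type*} [NormedAddCommGroup F]
    [NormedSpace ℝ F] {φ : (κ → AddCircle p) → F}
    (hφ : ContDiff ℝ 1 fun v : κ → ℝ => φ fun j => (v j : AddCircle p)) :
    ∃ L : NNReal, LipschitzWith L φ := by
  obtain ⟨L, hL⟩ := hφ.contDiffOn.exists_lipschitzOnWith (s := Metric.closedBall 0 |p|)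
    one_ne_zero (convex_closedBall _ _) (isCompact_closedBall _ _)
  refine ⟨L, .of_dist_le_mul fun x y => ?_⟩
  obtain ⟨v, hv, hv_norm⟩ := exists_pi_coe_eq_and_norm_eq y
  obtain ⟨w, hw, hw_norm⟩ := exists_pi_coe_eq_and_norm_eq (x - y)
  have hv_le : ‖v‖ ≤ |p| / 2 := hv_norm.trans_le (norm_pi_addCircle_le hp y)
  have hw_le : ‖w‖ ≤ |p| / 2 := hw_norm.trans_le (norm_pi_addCircle_le hp (x - y))
  have hlift : (fun j => ((v + w) j : AddCircle p)) = x := by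
    rw [← add_sub_cancel y x, ← hw, ← hv]
    rfl
  have hdist := hL.dist_le_mul (v + w)
    (mem_closedBall_zero_iff.2 <| (norm_add_le v w).trans (by linarith)) v
    (mem_closedBall_zero_iff.2 <| by linarith [norm_nonneg v])
  rwa [hlift, hv, dist_eq_norm (v + w), add_sub_cancel_left, hw_norm, ← dist_eq_norm] at hdist

end LipschitzTorus

section Kernels

variable {d N : ℕ} {K : Torus d → EuclideanSpace ℝ (Fin d)} {φ : Torus d → ℝ} {B : ℝ}
  {ρ : Measure (Torus d)} [IsProbabilityMeasure ρ] {ρN : Measure (Fin N → Torus d)}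
  [IsProbabilityMeasure ρN]

theorem integral_norm_psiDiff_psiBil₁_le {A : ℝ} (hφ : Measurable φ) (hA : ∀ x, |φ x| ≤ A)
    (hK : Measurable K) (hB : ∀ x, ‖K x‖ ≤ B) (hN : 0 < N)
    (hH : relEntropy ρN (Measure.pi fun _ => ρ) < ⊤) :
    ∫ x, ‖psiDiff d (psiBil₁ d K φ) (empiricalMeasure d N x) ρ‖ ∂ρN
      ≤ 40 * d * (A * B) / N * ((relEntropy ρN (Measure.pi fun _ => ρ)).toReal + 1) := by
  have hA0 : 0 ≤ A := (abs_nonneg _).trans (hA 0)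
  refine integral_norm_psiDiff_le (by fun_prop) (fun x y => ?_) hN hH
  rw [norm_smul]
  exact mul_le_mul (hA x) (hB (x - y)) (norm_nonneg _) hA0

lemma norm_half_sub_smul_le {L : NNReal} (hφ : LipschitzWith L φ)
    (hB : ∀ x, dist x 0 * ‖K x‖ ≤ B) (x y : Torus d) :
    ‖((2 : ℝ)⁻¹ * (φ x - φ y)) • K (x - y)‖ ≤ L * B / 2 :=
  calc ‖((2 : ℝ)⁻¹ * (φ x - φ y)) • K (x - y)‖ = dist (φ x) (φ y) * ‖K (x - y)‖ / 2 := by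
        rw [norm_smul, norm_mul, dist_eq_norm]
        norm_num
        ring
    _ ≤ L * dist x y * ‖K (x - y)‖ / 2 := by
        gcongr
        exact hφ.dist_le_mul x y
    _ = L * (dist (x - y) 0 * ‖K (x - y)‖) / 2 := by
        rw [dist_zero_right, dist_eq_norm, mul_assoc]
    _ ≤ L * B / 2 := by
        gcongr
        exact hB _

theorem integral_norm_psiDiff_psiBil₂_le {L : NNReal} (hφ : LipschitzWith L φ)
    (hK : Measurable K) (hB : ∀ x, dist x 0 * ‖K x‖ ≤ B) (hN : 0 < N)
    (hH : relEntropy ρN (Measure.pi fun _ => ρ) < ⊤) :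
    ∫ x, ‖psiDiff d (psiBil₂ d K φ) (empiricalMeasure d N x) ρ‖ ∂ρN
      ≤ 40 * d * (L * B / 2) / N * ((relEntropy ρN (Measure.pi fun _ => ρ)).toReal + 1) := by
  have hφ_meas : Measurable φ := hφ.continuous.measurable
  exact integral_norm_psiDiff_le (by fun_prop) (norm_half_sub_smul_le hφ hB) hN hH

end Kernels

theorem statement9_general (d : ℕ) {φ : Torus d → ℝ} {L : NNReal} (hφ : LipschitzWith L φ)
    (B : ℝ) :
    (∃ C : ℝ, 0 < C ∧
      ∀ K : Torus d → EuclideanSpace ℝ (Fin d), Measurable K →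
        (∀ x, ‖K x‖ ≤ B) →
        ∀ N : ℕ, 0 < N →
        ∀ ρ : Measure (Torus d), IsProbabilityMeasure ρ →
        ∀ ρN : Measure (Fin N → Torus d), IsProbabilityMeasure ρN →
          relEntropy ρN (Measure.pi fun _ => ρ) < ⊤ →
          ∫ x, ‖psiDiff d (psiBil₁ d K φ) (empiricalMeasure d N x) ρ‖ ∂ρN
            ≤ C / N * ((relEntropy ρN (Measure.pi fun _ => ρ)).toReal + 1)) ∧
    (∃ C : ℝ, 0 < C ∧
      ∀ K : Torus d → EuclideanSpace ℝ (Fin d), Measurable K →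
        (∀ x, dist x 0 * ‖K x‖ ≤ B) →
        ∀ N : ℕ, 0 < N →
        ∀ ρ : Measure (Torus d), IsProbabilityMeasure ρ →
        ∀ ρN : Measure (Fin N → Torus d), IsProbabilityMeasure ρN →
          relEntropy ρN (Measure.pi fun _ => ρ) < ⊤ →
          ∫ x, ‖psiDiff d (psiBil₂ d K φ) (empiricalMeasure d N x) ρ‖ ∂ρN
            ≤ C / N * ((relEntropy ρN (Measure.pi fun _ => ρ)).toReal + 1)) := by
  have : Fact (0 < 2 * π) := ⟨two_pi_pos⟩
  obtain ⟨A, hA⟩ := isCompact_univ.exists_bound_of_continuousOn hφ.continuous.continuousOn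
  refine ⟨⟨max 1 (40 * d * (A * B)), by positivity, fun K hK hB N hN ρ _ ρN _ hH => ?_⟩,
    ⟨max 1 (40 * d * (L * B / 2)), by positivity, fun K hK hB N hN ρ _ ρN _ hH => ?_⟩⟩
  all_goals have hH0 := toReal_relEntropy_nonneg hH
  · refine (integral_norm_psiDiff_psiBil₁_le hφ.continuous.measurable (fun x => hA x trivial) hK hB
      hN hH).trans ?_
    gcongr
    exact le_max_right _ _
  · refine (integral_norm_psiDiff_psiBil₂_le hφ hK hB hN hH).trans ?_
    gcongr
    exact le_max_right _ _

/-- **Uniform estimate on the singular quadratic term (Lemma 2.7 of Wang–Zhao–Zhu).**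
Let `K : 𝕋^d → ℝ^d` satisfy either (i) `K` bounded (by `B`), or (ii) `K(−x) = −K(x)`,
`K(0) = 0` and `sup_x |x||K(x)| ≤ B`, and let `φ` be continuously differentiable on `𝕋^d`
(i.e. its periodic lift to `ℝ^d` is `C¹`).  Then there is `C > 0`, depending only on `d`,
`φ` and `B`, such that for every `N ≥ 2`, every probability measure `ρ̄` on `𝕋^d` and
every probability measure `ρ_N` on `(𝕋^d)^N` with `H(ρ_N | ρ̄^{⊗N}) < ∞`:
`∫ |Ψ(μ_N − ρ̄)| dρ_N ≤ (C/N)(H(ρ_N | ρ̄^{⊗N}) + 1)`,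
with `Ψ` the quadratic pairing of the respective case. -/
theorem statement9 (d : ℕ) (hd : 1 ≤ d) (φ : Torus d → ℝ)
    (hφ : ContDiff ℝ 1 fun v : Fin d → ℝ =>
      φ fun j => ((v j : ℝ) : AddCircle (2 * Real.pi)))
    (B : ℝ) :
    (∃ C : ℝ, 0 < C ∧
      ∀ K : Torus d → EuclideanSpace ℝ (Fin d), Measurable K →
        (∀ x, ‖K x‖ ≤ B) →
        ∀ N : ℕ, 2 ≤ N →
        ∀ (ρ : Measure (Torus d)), IsProbabilityMeasure ρ →
        ∀ (ρN : Measure (Fin N → Torus d)), IsProbabilityMeasure ρN →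
          relEntropy ρN (Measure.pi fun _ => ρ) < ⊤ →
          ∫ x : Fin N → Torus d,
              ‖psiDiff d (psiBil₁ d K φ) (empiricalMeasure d N x) ρ‖ ∂ρN
          ≤ C / N * ((relEntropy ρN (Measure.pi fun _ => ρ)).toReal + 1)) ∧
    (∃ C : ℝ, 0 < C ∧
      ∀ K : Torus d → EuclideanSpace ℝ (Fin d), Measurable K →
        (∀ x, K (-x) = -K x) → K 0 = 0 →
        (∀ x, dist x 0 * ‖K x‖ ≤ B) →
        ∀ N : ℕ, 2 ≤ N →
        ∀ (ρ : Measure (Torus d)), IsProbabilityMeasure ρ →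
        ∀ (ρN : Measure (Fin N → Torus d)), IsProbabilityMeasure ρN →
          relEntropy ρN (Measure.pi fun _ => ρ) < ⊤ →
          ∫ x : Fin N → Torus d,
              ‖psiDiff d (psiBil₂ d K φ) (empiricalMeasure d N x) ρ‖ ∂ρN
          ≤ C / N * ((relEntropy ρN (Measure.pi fun _ => ρ)).toReal + 1)) := by
  obtain ⟨L, hL⟩ := exists_lipschitzWith_of_contDiff_lift two_pi_pos.ne' hφ
  obtain ⟨⟨C₁, hC₁, h₁⟩, ⟨C₂, hC₂, h₂⟩⟩ := statement9_general d hL B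
  exact ⟨⟨C₁, hC₁, fun K hK hB N hN => h₁ K hK hB N (by omega)⟩,
    ⟨C₂, hC₂, fun K hK _ _ hB N hN => h₂ K hK hB N (by omega)⟩⟩
end

section
/- Let E be a Polish space (a separable, completely metrizable topological space with a compatible complete metric) and let (Z_N)_{N ≥ 1} be a sequence of E-valued random variables on a probability space (Ω, ℱ, ℙ). Then (Z_N) converges in probability to some E-valued random variable if and only if for every pair of strictly increasing sequences of indices (l_k) and (m_k) there exists a strictly increasing sequence (k_j) such that the joint laws of the pairs (Z_{l_{k_j}}, Z_{m_{k_j}}) converge weakly, as j → ∞, to a probability measure on E × E that is supported on the diagonal {(x, y) ∈ E × E : x = y}. -/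
open MeasureTheory Filter

/-!
If `Z N → Y` in probability, then along any two subsequences the pairs converge in probability,
hence in law, to `(Y, Y)`, whose law lives on the diagonal. Conversely, for `ε > 0` the set
`{p | ε ≤ edist p.1 p.2}` is closed and misses the diagonal, so by the portmanteau theorem the
hypothesis gives `P (ε ≤ edist (Z l) (Z m)) → 0` along a further subsequence of any pair of
subsequences: `Z` is Cauchy in probability. A rapidly Cauchy subsequence then converges almost
surely by Borel–Cantelli and the completeness of `E`, and Fatou's lemma shows that the whole
sequence converges in probability to its limit.
-/

section

open scoped ENNReal Topology

theorem tendsto_atTop_prod_of_strictMono_subseq {α : Type*} {u : ℕ × ℕ → α} {f : Filter α}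
    (h : ∀ l m : ℕ → ℕ, StrictMono l → StrictMono m →
      ∃ k : ℕ → ℕ, Tendsto (fun j => u (l (k j), m (k j))) atTop f) :
    Tendsto u (atTop ×ˢ atTop) f := by
  refine tendsto_of_subseq_tendsto fun ns hns => ?_
  obtain ⟨φ, hφ, hfst⟩ := strictMono_subseq_of_tendsto_atTop (tendsto_fst.comp hns)
  obtain ⟨ψ, hψ, hsnd⟩ := strictMono_subseq_of_tendsto_atTop
    ((tendsto_snd.comp hns).comp hφ.tendsto_atTop)
  obtain ⟨k, hk⟩ := h _ _ (hfst.comp hψ) hsnd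
  exact ⟨φ ∘ ψ ∘ k, hk⟩

variable {Ω ι E F : Type*} {mΩ : MeasurableSpace Ω} {μ : Measure Ω} {l : Filter ι}

theorem measure_le_of_ae_eventually_mem {s : Set Ω} {t : ℕ → Set Ω} {δ : ℝ≥0∞}
    (hs : ∀ᵐ ω ∂μ, ω ∈ s → ∀ᶠ n in atTop, ω ∈ t n) (ht : ∀ᶠ n in atTop, μ (t n) ≤ δ) :
    μ s ≤ δ := by
  have hmono : Monotone fun n => ⋂ k ≥ n, t k :=
    fun _ _ hab => Set.biInter_mono (fun _ hk => hab.trans hk) fun _ _ => subset_rfl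
  have hsub : s ≤ᵐ[μ] ⋃ n, ⋂ k ≥ n, t k := by
    filter_upwards [hs] with ω hω hωs
    obtain ⟨n, hn⟩ := eventually_atTop.1 (hω hωs)
    exact Set.mem_iUnion.2 ⟨n, Set.mem_iInter₂.2 hn⟩
  refine (measure_mono_ae hsub).trans ?_
  rw [hmono.measure_iUnion]
  refine iSup_le fun n => ?_
  obtain ⟨k, hk, hnk⟩ := (ht.and (eventually_ge_atTop n)).exists
  exact (measure_mono (Set.biInter_subset_of_mem hnk)).trans hk

theorem tendsto_measure_zero_of_isClosed [TopologicalSpace E]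
    [MeasurableSpace E] [OpensMeasurableSpace E] [HasOuterApproxClosed E]
    {νs : ι → FiniteMeasure E} {ν : FiniteMeasure E} (h : Tendsto νs l (𝓝 ν)) {s : Set E}
    (hs : IsClosed s) (hν : (ν : Measure E) s = 0) :
    Tendsto (fun i => (νs i : Measure E) s) l (𝓝 0) := by
  have hlimsup := FiniteMeasure.limsup_measure_closed_le_of_tendsto h hs
  rw [hν] at hlimsup
  exact tendsto_of_le_liminf_of_limsup_le zero_le hlimsup

/-- A family of functions `f` is Cauchy in measure along the filter `l` if for every `ε > 0` the
measure of `{ω | ε ≤ edist (f i ω) (f j ω)}` tends to `0` as `i` and `j` converge independently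
along `l`. This is the counterpart of `MeasureTheory.TendstoInMeasure` without a given limit. -/
def CauchyInMeasure [EDist E] (μ : Measure Ω) (f : ι → Ω → E) (l : Filter ι) : Prop :=
  ∀ ε, 0 < ε → Tendsto (fun p : ι × ι => μ {ω | ε ≤ edist (f p.1 ω) (f p.2 ω)}) (l ×ˢ l) (𝓝 0)

theorem CauchyInMeasure.exists_seq_measure_le [EDist E] {f : ℕ → Ω → E}
    (hf : CauchyInMeasure μ f atTop) {d : ℕ → ℝ≥0∞} (hd : ∀ n, 0 < d n) :
    ∃ ns : ℕ → ℕ, StrictMono ns ∧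
      ∀ n, μ {ω | d n ≤ edist (f (ns n) ω) (f (ns (n + 1)) ω)} ≤ d n := by
  have hev (n : ℕ) : ∀ᶠ i in atTop, ∀ j ≥ i, μ {ω | d n ≤ edist (f i ω) (f j ω)} ≤ d n := by
    have h := (hf (d n) (hd n)).eventually_le_const (hd n)
    rw [prod_atTop_atTop_eq, eventually_atTop_prod_self'] at h
    obtain ⟨N, hN⟩ := h
    filter_upwards [eventually_ge_atTop N] with i hi j hj
    exact hN i hi j (hi.trans hj)
  obtain ⟨ns, hns, hle⟩ := extraction_forall_of_eventually hev
  exact ⟨ns, hns, fun n => hle n _ (hns n.lt_succ_self).le⟩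

section PseudoEMetricSpace

variable [PseudoEMetricSpace E]

theorem ae_cauchySeq_of_tsum_measure_ne_top {f : ℕ → Ω → E} {d : ℕ → ℝ≥0∞}
    (hd : ∑' n, d n ≠ ∞) (hμ : ∑' n, μ {ω | d n ≤ edist (f n ω) (f (n + 1) ω)} ≠ ∞) :
    ∀ᵐ ω ∂μ, CauchySeq fun n => f n ω := by
  filter_upwards [ae_eventually_notMem hμ] with ω hω
  obtain ⟨N, hN⟩ := eventually_atTop.1 hω
  refine (cauchySeq_shift N).1 (cauchySeq_of_edist_le_of_tsum_ne_top (fun n => d (n + N)) ?_ ?_)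
  · intro n
    rw [Nat.succ_add]
    exact (not_le.1 (hN (n + N) (Nat.le_add_left N n))).le
  · exact ne_top_of_le_ne_top hd (ENNReal.tsum_comp_le_tsum_of_injective (add_left_injective N) d)

namespace CauchyInMeasure

theorem exists_seq_ae_cauchySeq {f : ℕ → Ω → E} (hf : CauchyInMeasure μ f atTop) :
    ∃ ns : ℕ → ℕ, StrictMono ns ∧ ∀ᵐ ω ∂μ, CauchySeq fun n => f (ns n) ω := by
  obtain ⟨ns, hns, hle⟩ := hf.exists_seq_measure_le (d := fun n => 2⁻¹ ^ n)
    fun n => ENNReal.pow_pos (by simp) n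
  have hsum : ∑' n : ℕ, (2⁻¹ : ℝ≥0∞) ^ n ≠ ∞ := by
    simp [ENNReal.tsum_geometric, ENNReal.one_sub_inv_two]
  exact ⟨ns, hns, ae_cauchySeq_of_tsum_measure_ne_top hsum
    (ne_top_of_le_ne_top hsum (ENNReal.tsum_le_tsum hle))⟩

theorem tendstoInMeasure_of_ae_tendsto_subseq {f : ι → Ω → E} (hf : CauchyInMeasure μ f l)
    {ns : ℕ → ι} (hns : Tendsto ns atTop l) {g : Ω → E}
    (hg : ∀ᵐ ω ∂μ, Tendsto (fun n => f (ns n) ω) atTop (𝓝 (g ω))) :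
    TendstoInMeasure μ f l g := by
  refine tendstoInMeasure_of_ne_top fun ε hε hε_top => ENNReal.tendsto_nhds_zero.2 fun δ hδ => ?_
  have hhalf : ∀ᶠ i in l, ∀ᶠ j in l, μ {ω | ε / 2 ≤ edist (f i ω) (f j ω)} ≤ δ :=
    ((hf (ε / 2) (ENNReal.half_pos hε.ne')).eventually_le_const hδ).curry
  filter_upwards [hhalf] with i hi
  refine measure_le_of_ae_eventually_mem ?_ (hns.eventually hi)
  filter_upwards [hg] with ω hω hle
  exact ((tendsto_const_nhds.edist hω).eventually_const_lt
    ((ENNReal.half_lt_self hε.ne' hε_top).trans_le hle)).mono fun _ h => h.le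

theorem exists_measurable_tendstoInMeasure [CompleteSpace E] [MeasurableSpace E] [BorelSpace E]
    {f : ℕ → Ω → E} (hf : CauchyInMeasure μ f atTop) (hmeas : ∀ n, AEMeasurable (f n) μ) :
    ∃ g : Ω → E, Measurable g ∧ TendstoInMeasure μ f atTop g := by
  obtain ⟨ns, hns, hcauchy⟩ := hf.exists_seq_ae_cauchySeq
  obtain ⟨g, hg, hlim⟩ := measurable_limit_of_tendsto_metrizable_ae (fun n => hmeas (ns n))
    (hcauchy.mono fun _ => cauchySeq_tendsto_of_complete)
  exact ⟨g, hg, hf.tendstoInMeasure_of_ae_tendsto_subseq hns.tendsto_atTop hlim⟩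

end CauchyInMeasure

theorem tendstoInMeasure_prodMk [PseudoEMetricSpace F] {X : ι → Ω → E} {Y : ι → Ω → F}
    {X' : Ω → E} {Y' : Ω → F} (hX : TendstoInMeasure μ X l X') (hY : TendstoInMeasure μ Y l Y') :
    TendstoInMeasure μ (fun i ω => (X i ω, Y i ω)) l fun ω => (X' ω, Y' ω) := by
  intro ε hε
  refine tendsto_of_tendsto_of_tendsto_of_le_of_le tendsto_const_nhds
    (by simpa only [add_zero] using (hX ε hε).add (hY ε hε)) (fun _ => zero_le) fun i => ?_
  simp only [Prod.edist_eq, le_sup_iff]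
  exact measure_union_le _ _

theorem tendsto_measure_le_edist_of_tendsto_integral_map [SecondCountableTopology E]
    [MeasurableSpace E] [OpensMeasurableSpace E] [IsFiniteMeasure μ] {X Y : ι → Ω → E}
    (hX : ∀ i, AEMeasurable (X i) μ) (hY : ∀ i, AEMeasurable (Y i) μ)
    {ν : Measure (E × E)} [IsFiniteMeasure ν] (hν : ν {p | p.1 ≠ p.2} = 0)
    (h : ∀ g : BoundedContinuousFunction (E × E) ℝ,
      Tendsto (fun i => ∫ p, g p ∂(μ.map fun ω => (X i ω, Y i ω))) l (𝓝 (∫ p, g p ∂ν)))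
    {ε : ℝ≥0∞} (hε : 0 < ε) :
    Tendsto (fun i => μ {ω | ε ≤ edist (X i ω) (Y i ω)}) l (𝓝 0) := by
  have hclosed : IsClosed {p : E × E | ε ≤ edist p.1 p.2} :=
    isClosed_le continuous_const (continuous_fst.edist continuous_snd)
  have hoff : {p : E × E | ε ≤ edist p.1 p.2} ⊆ {p | p.1 ≠ p.2} := by
    rintro ⟨x, y⟩ hle (rfl : x = y)
    exact hε.not_ge (hle.trans_eq (edist_self x))
  have hlaw : Tendsto (β := FiniteMeasure (E × E))
      (fun i => ⟨μ.map fun ω => (X i ω, Y i ω), inferInstance⟩) l (𝓝 ⟨ν, inferInstance⟩) :=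
    FiniteMeasure.tendsto_iff_forall_integral_tendsto.2 h
  have hzero := tendsto_measure_zero_of_isClosed hlaw hclosed (measure_mono_null hoff hν)
  exact hzero.congr fun i => Measure.map_apply_of_aemeasurable ((hX i).prodMk (hY i))
    hclosed.measurableSet

end PseudoEMetricSpace

theorem tendsto_integral_map_of_tendstoInMeasure [PseudoEMetricSpace E] [MeasurableSpace E]
    [BorelSpace E] [IsProbabilityMeasure μ] [l.IsCountablyGenerated] [l.NeBot] {X : ι → Ω → E}
    {X' : Ω → E} (h : TendstoInMeasure μ X l X') (hX : ∀ i, AEMeasurable (X i) μ)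
    (g : BoundedContinuousFunction E ℝ) :
    Tendsto (fun i => ∫ x, g x ∂(μ.map (X i))) l (𝓝 (∫ x, g x ∂(μ.map X'))) :=
  ProbabilityMeasure.tendsto_iff_forall_integral_tendsto.1 (h.tendstoInDistribution hX).tendsto g

theorem map_prodMk_self_ne_eq_zero [MeasurableSpace E] [MeasurableEq E] {X : Ω → E}
    (hX : AEMeasurable X μ) : μ.map (fun ω => (X ω, X ω)) {p | p.1 ≠ p.2} = 0 := by
  have hoff : MeasurableSet {p : E × E | p.1 ≠ p.2} :=
    (measurableSet_eq_fun measurable_fst measurable_snd).compl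
  simp [Measure.map_apply_of_aemeasurable (hX.prodMk hX) hoff]

end

/-- **Gyöngy–Krylov lemma.**  Let `E` be a Polish space (here: a complete separable metric
space with its Borel σ-algebra) and `(Z_N)` a sequence of `E`-valued random variables on a
probability space `(Ω, ℱ, ℙ)`.  Then `(Z_N)` converges in probability to some `E`-valued
random variable if and only if for every pair of (strictly increasing) subsequences
`(l_k)`, `(m_k)` there is a further subsequence `(k_j)` such that the joint laws of
`(Z_{l_{k_j}}, Z_{m_{k_j}})` converge weakly to a probability measure on `E × E`
supported on the diagonal. -/
theorem statement10 {Ω : Type*} [MeasurableSpace Ω] (P : Measure Ω)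
    [IsProbabilityMeasure P]
    {E : Type*} [MetricSpace E] [CompleteSpace E] [SecondCountableTopology E]
    [MeasurableSpace E] [BorelSpace E]
    (Z : ℕ → Ω → E) (hZ : ∀ N, Measurable (Z N)) :
    (∃ Zlim : Ω → E, Measurable Zlim ∧ TendstoInMeasure P Z atTop Zlim) ↔
    (∀ l m : ℕ → ℕ, StrictMono l → StrictMono m →
      ∃ k : ℕ → ℕ, StrictMono k ∧
        ∃ μ : Measure (E × E), IsProbabilityMeasure μ ∧
          μ {p : E × E | p.1 ≠ p.2} = 0 ∧
          ∀ g : BoundedContinuousFunction (E × E) ℝ,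
            Tendsto
              (fun j => ∫ p, g p
                ∂(Measure.map (fun ω => (Z (l (k j)) ω, Z (m (k j)) ω)) P))
              atTop (nhds (∫ p, g p ∂μ))) := by
  constructor
  · rintro ⟨Y, hY, hlim⟩ l m hl hm
    have hpair : TendstoInMeasure P (fun j ω => (Z (l j) ω, Z (m j) ω)) atTop
        fun ω => (Y ω, Y ω) :=
      tendstoInMeasure_prodMk (hlim.comp hl.tendsto_atTop) (hlim.comp hm.tendsto_atTop)
    exact ⟨id, strictMono_id, P.map fun ω => (Y ω, Y ω),
      Measure.isProbabilityMeasure_map (hY.prodMk hY).aemeasurable,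
      map_prodMk_self_ne_eq_zero hY.aemeasurable,
      tendsto_integral_map_of_tendstoInMeasure hpair
        fun j => ((hZ (l j)).prodMk (hZ (m j))).aemeasurable⟩
  · intro H
    have hcauchy : CauchyInMeasure P Z atTop := by
      refine fun ε hε => tendsto_atTop_prod_of_strictMono_subseq fun l m hl hm => ?_
      obtain ⟨k, -, μ, _, hdiag, hlaw⟩ := H l m hl hm
      exact ⟨k, tendsto_measure_le_edist_of_tendsto_integral_map
        (fun j => (hZ (l (k j))).aemeasurable) (fun j => (hZ (m (k j))).aemeasurable) hdiag hlaw hε⟩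
    exact hcauchy.exists_measurable_tendstoInMeasure fun N => (hZ N).aemeasurable
end

section
/- Let d ≥ 1, let ρ̄ be a probability measure on ℝ^d, and let φ : ℝ^d → ℝ be a Schwartz function. Set m := ∫ φ dρ̄ and v := ∫ φ² dρ̄ − m², let G_φ denote the centered Gaussian measure on ℝ with variance v, and for a probability measure P on (ℝ^d)^N let T_N P denote the pushforward of P under the map (x_1,…,x_N) ↦ (Σ_{i=1}^N φ(x_i) − N m)/√N. Then there exists λ > 0, depending only on ρ̄ and φ, such that for every integer N ≥ 2, every probability measure ρ_N on (ℝ^d)^N, and every κ > 0: d_bL( T_N ρ_N, G_φ ) ≤ (1/κ) H( ρ_N | ρ̄^{⊗N} ) + κ/(2λ) + d_bL( T_N (ρ̄^{⊗N}), G_φ ). -/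
/-!
A bounded-Lipschitz test function takes values in `[-1, 1]`, so by Hoeffding's lemma it is, once
centred, sub-Gaussian with constant `1` under every probability measure. Inserting this bound on its
cumulant generating function into the Donsker–Varadhan inequality gives
`d_bL(μ, ν) ≤ H(μ|ν) / κ + κ / 2` for all probability measures `μ`, `ν` on `ℝ`. Relative entropy
does not increase under push-forward by `T_N`, so the same bound holds for
`d_bL(T_N ρ_N, T_N ρ̄^{⊗N})`, and the triangle inequality concludes, with `λ = 1`.
-/

open MeasureTheory Classical

/-- The bounded-Lipschitz distance between two measures on `ℝ`:
`d_bL(μ,ν) = sup { ∫ g dμ − ∫ g dν : ‖g‖_∞ + ‖g‖_Lip ≤ 1 }`. -/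
noncomputable def dBL (μ ν : Measure ℝ) : ℝ :=
  sSup { r : ℝ | ∃ g : ℝ → ℝ, ∃ Cb CL : ℝ, 0 ≤ CL ∧
    (∀ x, |g x| ≤ Cb) ∧ LipschitzWith (Real.toNNReal CL) g ∧ Cb + CL ≤ 1 ∧
    r = ∫ x, g x ∂μ - ∫ x, g x ∂ν }

/-- The law of the normalized fluctuation
`(x_1,…,x_N) ↦ (∑_i φ(x_i) − N m)/√N` under a measure `P` on `(ℝ^d)^N`. -/
noncomputable def fluctLaw (d N : ℕ) (φ : EuclideanSpace ℝ (Fin d) → ℝ) (m : ℝ)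
    (P : Measure (Fin N → EuclideanSpace ℝ (Fin d))) : Measure ℝ :=
  Measure.map (fun x => ((∑ i, φ (x i)) - N * m) / Real.sqrt N) P

section RelativeEntropy

open InformationTheory ProbabilityTheory

variable {E : Type*} [MeasurableSpace E] {μ ν : Measure E} [IsProbabilityMeasure μ]

lemma relEntropy_eq_klDiv [IsProbabilityMeasure ν] : relEntropy μ ν = klDiv μ ν := by
  rw [relEntropy]
  split_ifs with h
  · obtain ⟨hac, hint⟩ := h
    rw [integrable_rnDeriv_mul_log_iff hac] at hint
    rw [integral_rnDeriv_mul_log hac, ← EReal.coe_ennreal_toReal (klDiv_ne_top hac hint),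
      toReal_klDiv_of_measure_eq hac (by simp)]
  · have htop : klDiv μ ν = ⊤ := klDiv_eq_top_iff.2 fun hac hint =>
      h ⟨hac, (integrable_rnDeriv_mul_log_iff hac).2 hint⟩
    rw [htop, EReal.coe_ennreal_top]

/-- The Donsker–Varadhan inequality. The gap between the two sides is the relative entropy of `μ`
with respect to the tilted measure `ν.tilted f`, which is nonnegative. -/
theorem integral_sub_log_integral_exp_le_integral_llr [SigmaFinite ν] {f : E → ℝ} (hac : μ ≪ ν)
    (hllr : Integrable (llr μ ν) μ) (hf : Integrable f μ)
    (hexp : Integrable (fun x => Real.exp (f x)) ν) :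
    ∫ x, f x ∂μ - Real.log (∫ x, Real.exp (f x) ∂ν) ≤ ∫ x, llr μ ν x ∂μ := by
  have : NeZero ν := ⟨fun hν => IsProbabilityMeasure.ne_zero μ
    (Measure.absolutelyContinuous_zero_iff.1 (hν ▸ hac))⟩
  have := isProbabilityMeasure_tilted hexp
  have gibbs : 0 ≤ ∫ x, llr μ (ν.tilted f) x ∂μ := by
    simpa using integral_llr_add_sub_measure_univ_nonneg
      (hac.trans (absolutelyContinuous_tilted hexp)) (integrable_llr_tilted_right hac hf hllr hexp)
  rw [integral_llr_tilted_right hac hf hexp hllr] at gibbs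
  linarith

theorem integral_le_integral_llr_of_hasSubgaussianMGF [SigmaFinite ν] {f : E → ℝ} {c : NNReal}
    (hac : μ ≪ ν) (hllr : Integrable (llr μ ν) μ) (hf : Integrable f μ)
    (hsub : HasSubgaussianMGF f c ν) {κ : ℝ} (hκ : 0 < κ) :
    ∫ x, f x ∂μ ≤ κ⁻¹ * ∫ x, llr μ ν x ∂μ + c * κ / 2 := by
  have dv := integral_sub_log_integral_exp_le_integral_llr hac hllr (hf.const_mul κ)
    (hsub.integrable_exp_mul κ)
  have hcgf : Real.log (∫ x, Real.exp (κ * f x) ∂ν) ≤ c * κ ^ 2 / 2 := hsub.cgf_le κ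
  rw [integral_const_mul] at dv
  refine le_of_mul_le_mul_left ?_ hκ
  calc κ * ∫ x, f x ∂μ ≤ ∫ x, llr μ ν x ∂μ + c * κ ^ 2 / 2 := by linarith
    _ = κ * (κ⁻¹ * ∫ x, llr μ ν x ∂μ + c * κ / 2) := by field_simp

theorem integral_sub_integral_le_klDiv_of_abs_le [IsProbabilityMeasure ν] {f : E → ℝ}
    (hf : AEMeasurable f ν) {b : ℝ} (hb : ∀ᵐ x ∂ν, |f x| ≤ b) (hkl : klDiv μ ν ≠ ⊤) {κ : ℝ}
    (hκ : 0 < κ) :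
    ∫ x, f x ∂μ - ∫ x, f x ∂ν ≤ κ⁻¹ * (klDiv μ ν).toReal + b ^ 2 * κ / 2 := by
  obtain ⟨hac, hllr⟩ := klDiv_ne_top_iff.1 hkl
  have hfμ : Integrable f μ := .of_bound (hf.mono_ac hac).aestronglyMeasurable b (hac.ae_le hb)
  have hoeffding := hasSubgaussianMGF_of_mem_Icc hf (hb.mono fun _ => abs_le.1)
  have hvar : (((‖b - -b‖₊ / 2) ^ 2 : NNReal) : ℝ) = b ^ 2 := by
    rw [sub_neg_eq_add, ← two_mul]
    simp
  have key := integral_le_integral_llr_of_hasSubgaussianMGF hac hllr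
    (hfμ.sub (integrable_const _)) hoeffding hκ
  rw [hvar] at key
  rw [toReal_klDiv_of_measure_eq hac (by simp)]
  simpa [integral_sub hfμ (integrable_const _)] using key

end RelativeEntropy

/-- The test functions of the bounded-Lipschitz distance: those `g` with
`‖g‖_∞ + ‖g‖_Lip ≤ 1`. As in `dBL`, the two norms are encoded by upper bounds `Cb` and `CL`. -/
def IsBLTest (g : ℝ → ℝ) : Prop :=
  ∃ Cb CL : ℝ, 0 ≤ CL ∧ (∀ x, |g x| ≤ Cb) ∧ LipschitzWith (Real.toNNReal CL) g ∧ Cb + CL ≤ 1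

section BoundedLipschitz

open InformationTheory

variable {g : ℝ → ℝ} {μ ν γ : Measure ℝ}

lemma isBLTest_zero : IsBLTest 0 :=
  ⟨0, 0, le_rfl, by simp, LipschitzWith.const' 0, by simp⟩

lemma IsBLTest.abs_le_one (hg : IsBLTest g) (x : ℝ) : |g x| ≤ 1 := by
  obtain ⟨Cb, CL, hCL, hb, -, hsum⟩ := hg
  linarith [hb x]

lemma IsBLTest.continuous (hg : IsBLTest g) : Continuous g := by
  obtain ⟨_, _, -, -, hL, -⟩ := hg
  exact hL.continuous

lemma IsBLTest.abs_integral_le [IsFiniteMeasure μ] (hg : IsBLTest g) :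
    |∫ x, g x ∂μ| ≤ μ.real Set.univ := by
  simpa using norm_integral_le_of_norm_le_const (f := g) (C := 1) (.of_forall hg.abs_le_one)

lemma dBL_eq_sSup : dBL μ ν = sSup {r | ∃ g, IsBLTest g ∧ r = ∫ x, g x ∂μ - ∫ x, g x ∂ν} := by
  simp only [dBL, IsBLTest, ← exists_and_right, and_assoc]

lemma dBL_le {C : ℝ} (h : ∀ g, IsBLTest g → ∫ x, g x ∂μ - ∫ x, g x ∂ν ≤ C) : dBL μ ν ≤ C := by
  rw [dBL_eq_sSup]
  refine csSup_le ⟨_, 0, isBLTest_zero, rfl⟩ ?_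
  rintro _ ⟨g, hg, rfl⟩
  exact h g hg

lemma IsBLTest.integral_sub_le_dBL [IsFiniteMeasure μ] [IsFiniteMeasure ν] (hg : IsBLTest g) :
    ∫ x, g x ∂μ - ∫ x, g x ∂ν ≤ dBL μ ν := by
  rw [dBL_eq_sSup]
  refine le_csSup ⟨μ.real Set.univ + ν.real Set.univ, ?_⟩ ⟨g, hg, rfl⟩
  rintro _ ⟨f, hf, rfl⟩
  linarith [(abs_le.1 (hf.abs_integral_le (μ := μ))).2, (abs_le.1 (hf.abs_integral_le (μ := ν))).1]

lemma dBL_triangle [IsFiniteMeasure μ] [IsFiniteMeasure ν] [IsFiniteMeasure γ] :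
    dBL μ γ ≤ dBL μ ν + dBL ν γ := by
  refine dBL_le fun g hg => ?_
  linarith [hg.integral_sub_le_dBL (μ := μ) (ν := ν), hg.integral_sub_le_dBL (μ := ν) (ν := γ)]

theorem dBL_le_klDiv [IsProbabilityMeasure μ] [IsProbabilityMeasure ν] {κ : ℝ} (hκ : 0 < κ) :
    (dBL μ ν : EReal) ≤ (κ⁻¹ : ℝ) * (klDiv μ ν : EReal) + (κ / 2 : ℝ) := by
  by_cases hkl : klDiv μ ν = ⊤
  · rw [hkl, EReal.coe_ennreal_top, EReal.coe_mul_top_of_pos (inv_pos.2 hκ), EReal.top_add_coe]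
    exact le_top
  · rw [← EReal.coe_ennreal_toReal hkl]
    norm_cast
    refine dBL_le fun g hg => ?_
    simpa using integral_sub_integral_le_klDiv_of_abs_le hg.continuous.aemeasurable
      (.of_forall hg.abs_le_one) hkl hκ

theorem dBL_map_le_klDiv {E : Type*} [MeasurableSpace E] {P Q : Measure E}
    [IsProbabilityMeasure P] [IsProbabilityMeasure Q] {T : E → ℝ} (hT : Measurable T) {κ : ℝ}
    (hκ : 0 < κ) :
    (dBL (P.map T) (Q.map T) : EReal) ≤ (κ⁻¹ : ℝ) * (klDiv P Q : EReal) + (κ / 2 : ℝ) := by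
  have := Measure.isProbabilityMeasure_map (μ := P) hT.aemeasurable
  have := Measure.isProbabilityMeasure_map (μ := Q) hT.aemeasurable
  refine (dBL_le_klDiv hκ).trans ?_
  gcongr
  exact_mod_cast klDiv_map_le P Q hT

end BoundedLipschitz

theorem statement11_general {E : Type*} [MeasurableSpace E] {P Q : Measure E}
    [IsProbabilityMeasure P] [IsProbabilityMeasure Q] {T : E → ℝ} (hT : Measurable T)
    (γ : Measure ℝ) [IsFiniteMeasure γ] {κ : ℝ} (hκ : 0 < κ) :
    (dBL (P.map T) γ : EReal) ≤
      (κ⁻¹ : ℝ) * relEntropy P Q + (κ / 2 + dBL (Q.map T) γ : ℝ) := by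
  rw [relEntropy_eq_klDiv, EReal.coe_add, ← add_assoc]
  calc (dBL (P.map T) γ : EReal)
      ≤ dBL (P.map T) (Q.map T) + dBL (Q.map T) γ := mod_cast dBL_triangle
    _ ≤ (κ⁻¹ : ℝ) * (InformationTheory.klDiv P Q : EReal) + (κ / 2 : ℝ) + dBL (Q.map T) γ := by
      gcongr
      exact dBL_map_le_klDiv hT hκ

/-- **Quantitative CLT via relative entropy (Proposition 6.3 of Wang–Zhao–Zhu).**
Let `ρ̄` be a probability measure on `ℝ^d` and `φ` a Schwartz function with mean
`m = ∫ φ dρ̄` and variance `v = ∫ φ² dρ̄ − m²`; let `G_φ` be the centered Gaussian on `ℝ`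
with variance `v`.  Then there is `λ > 0` (depending only on `ρ̄` and `φ`) such that for
every `N ≥ 2`, every probability measure `ρ_N` on `(ℝ^d)^N` and every `κ > 0`:
`d_bL(T_N ρ_N, G_φ) ≤ (1/κ) H(ρ_N | ρ̄^{⊗N}) + κ/(2λ) + d_bL(T_N ρ̄^{⊗N}, G_φ)`
(as an inequality in the extended reals, the entropy possibly being infinite). -/
theorem statement11 (d : ℕ) (hd : 1 ≤ d)
    (ρ : Measure (EuclideanSpace ℝ (Fin d))) [IsProbabilityMeasure ρ]
    (φ : SchwartzMap (EuclideanSpace ℝ (Fin d)) ℝ) :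
    ∃ lam : ℝ, 0 < lam ∧
      ∀ N : ℕ, 2 ≤ N →
      ∀ (ρN : Measure (Fin N → EuclideanSpace ℝ (Fin d))), IsProbabilityMeasure ρN →
      ∀ κ : ℝ, 0 < κ →
        ((dBL
            (fluctLaw d N φ (∫ y, φ y ∂ρ) ρN)
            (ProbabilityTheory.gaussianReal 0
              (Real.toNNReal (∫ y, (φ y) ^ 2 ∂ρ - (∫ y, φ y ∂ρ) ^ 2))) : ℝ) : EReal)
          ≤ ((κ⁻¹ : ℝ) : EReal) * relEntropy ρN (Measure.pi fun _ => ρ)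
            + ((κ / (2 * lam)
                + dBL
                    (fluctLaw d N φ (∫ y, φ y ∂ρ) (Measure.pi fun _ => ρ))
                    (ProbabilityTheory.gaussianReal 0
                      (Real.toNNReal
                        (∫ y, (φ y) ^ 2 ∂ρ - (∫ y, φ y ∂ρ) ^ 2))) : ℝ) : EReal) := by
  have hφ : Measurable φ := φ.continuous.measurable
  exact ⟨1, one_pos, fun N _ ρN _ κ hκ => by
    simpa [fluctLaw] using statement11_general (by fun_prop) _ hκ⟩
end

section
/- Let d ≥ 1, let ρ̄ be a probability measure on ℝ^d, and let φ : ℝ^d → ℝ be a Schwartz function. Set m := ∫ φ dρ̄ and v := ∫ φ² dρ̄ − m², let G_φ denote the centered Gaussian measure on ℝ with variance v, and for each N let ρ_N be a probability measure on (ℝ^d)^N and let T_N ρ_N denote the pushforward of ρ_N under the map (x_1,…,x_N) ↦ (Σ_{i=1}^N φ(x_i) − N m)/√N. If H( ρ_N | ρ̄^{⊗N} ) → 0 as N → ∞, then the probability measures T_N ρ_N converge weakly to G_φ as N → ∞. -/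
open MeasureTheory Classical Filter

/-!
For probability measures, the Hellinger estimate `(√x - 1)² ≤ x log x + 1 - x` and the
Cauchy–Schwarz inequality give `(∫ |dμ/dν - 1| dν)² ≤ 4 H(μ|ν)`. Hence vanishing relative entropy
forces the integrals of uniformly bounded functions under the two measures to merge, whatever the
spaces they live on. For `g` bounded and continuous, the integrals of `g` of the normalized
fluctuation under `ρ_N` thus have the same limit as under `ρ^{⊗N}`, which is given by the central
limit theorem.
-/

section

open ProbabilityTheory InformationTheory
open scoped Topology BoundedContinuousFunction

section CauchySchwarz

variable {α : Type*} [MeasurableSpace α] {μ : Measure α} {a b f : α → ℝ}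

theorem sq_integral_le_integral_mul_integral_of_sq_le_mul (ha : Integrable a μ)
    (hb : Integrable b μ) (hf : Integrable f μ) (ha0 : 0 ≤ᵐ[μ] a) (hb0 : 0 ≤ᵐ[μ] b)
    (hfab : ∀ᵐ x ∂μ, f x ^ 2 ≤ a x * b x) :
    (∫ x, f x ∂μ) ^ 2 ≤ (∫ x, a x ∂μ) * ∫ x, b x ∂μ := by
  have hquad : ∀ t : ℝ,
      0 ≤ (∫ x, b x ∂μ) * (t * t) + (-2 * ∫ x, f x ∂μ) * t + ∫ x, a x ∂μ := by
    intro t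
    have hmono : ∫ x, (2 * t) * f x ∂μ ≤ ∫ x, (a x + (t * t) * b x) ∂μ := by
      refine integral_mono_ae (hf.const_mul _) (ha.add (hb.const_mul _)) ?_
      filter_upwards [ha0, hb0, hfab] with x hax hbx hfx
      have hsq : (t * f x) ^ 2 ≤ a x * (t * t * b x) := by
        linear_combination mul_le_mul_of_nonneg_left hfx (mul_self_nonneg t)
      linear_combination
        two_mul_le_add_of_sq_le_mul hax (mul_nonneg (mul_self_nonneg t) hbx) hsq
    rw [integral_const_mul, integral_add ha (hb.const_mul _), integral_const_mul] at hmono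
    linarith
  have hdiscrim := discrim_le_zero hquad
  rw [discrim] at hdiscrim
  linarith

end CauchySchwarz

section TotalVariation

theorem sq_sqrt_sub_one_le_klFun {x : ℝ} (hx : 0 ≤ x) : (√x - 1) ^ 2 ≤ klFun x := by
  rcases hx.eq_or_lt with rfl | hpos
  · simp [klFun]
  · have hlog : 1 - (√x)⁻¹ ≤ Real.log x / 2 := by
      rw [← Real.log_sqrt hx]
      exact Real.one_sub_inv_le_log_of_pos (Real.sqrt_pos.2 hpos)
    have hmul : x * (1 - (√x)⁻¹) = x - √x := by
      rw [mul_sub, mul_one, ← div_eq_mul_inv, Real.div_sqrt]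
    rw [klFun_apply]
    linarith [mul_le_mul_of_nonneg_left hlog hx, Real.sq_sqrt hx]

theorem sq_sub_one_le_klFun_mul {x : ℝ} (hx : 0 ≤ x) :
    (x - 1) ^ 2 ≤ klFun x * (2 * (x + 1)) := by
  have hfactor : x - 1 = (√x - 1) * (√x + 1) := by
    linear_combination -Real.sq_sqrt hx
  have hsum : (√x + 1) ^ 2 ≤ 2 * (x + 1) := by
    linarith [Real.sq_sqrt hx, sq_nonneg (√x - 1)]
  rw [hfactor, mul_pow]
  exact mul_le_mul (sq_sqrt_sub_one_le_klFun hx) hsum (sq_nonneg _) (klFun_nonneg hx)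

variable {E : Type*} [MeasurableSpace E] {μ ν : Measure E} [IsFiniteMeasure μ]
  [IsFiniteMeasure ν]

-- For probability measures: the Pinsker inequality with constant `4` in place of the sharp `2`.
theorem sq_integral_abs_rnDeriv_sub_one_le (hfin : klDiv μ ν ≠ ⊤) :
    (∫ x, |(μ.rnDeriv ν x).toReal - 1| ∂ν) ^ 2 ≤
      (klDiv μ ν).toReal * (2 * (μ.real Set.univ + ν.real Set.univ)) := by
  obtain ⟨hac, hllr⟩ := klDiv_ne_top_iff.1 hfin
  have hderiv : Integrable (fun x ↦ (μ.rnDeriv ν x).toReal) ν := Measure.integrable_toReal_rnDeriv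
  have hmass : ∫ x, 2 * ((μ.rnDeriv ν x).toReal + 1) ∂ν =
      2 * (μ.real Set.univ + ν.real Set.univ) := by
    rw [integral_const_mul, integral_add hderiv (integrable_const 1),
      Measure.integral_toReal_rnDeriv hac, integral_const, smul_eq_mul, mul_one]
  rw [toReal_klDiv_eq_integral_klFun hac, ← hmass]
  refine sq_integral_le_integral_mul_integral_of_sq_le_mul
    ((integrable_klFun_rnDeriv_iff hac).2 hllr) ((hderiv.add (integrable_const 1)).const_mul 2)
    (hderiv.sub (integrable_const 1)).abs (ae_of_all _ fun x ↦ klFun_nonneg ENNReal.toReal_nonneg)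
    (ae_of_all _ fun x ↦ by positivity) (ae_of_all _ fun x ↦ ?_)
  rw [sq_abs]
  exact sq_sub_one_le_klFun_mul ENNReal.toReal_nonneg

theorem norm_integral_sub_integral_le_mul_integral_abs_rnDeriv_sub_one {G : Type*}
    [NormedAddCommGroup G] [NormedSpace ℝ G] {F : E → G} {M : ℝ} (hac : μ ≪ ν)
    (hF : AEStronglyMeasurable F ν) (hM : ∀ᵐ x ∂ν, ‖F x‖ ≤ M) :
    ‖∫ x, F x ∂μ - ∫ x, F x ∂ν‖ ≤ M * ∫ x, |(μ.rnDeriv ν x).toReal - 1| ∂ν := by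
  have hFμ : Integrable F μ := .of_bound (hF.mono_ac hac) M (hac.ae_le hM)
  have hFν : Integrable F ν := .of_bound hF M hM
  have hdiff : ∫ x, F x ∂μ - ∫ x, F x ∂ν = ∫ x, ((μ.rnDeriv ν x).toReal - 1) • F x ∂ν := by
    rw [← integral_rnDeriv_smul hac, ← integral_sub ((integrable_rnDeriv_smul_iff hac).2 hFμ) hFν]
    simp only [sub_smul, one_smul]
  rw [hdiff, ← integral_const_mul]
  refine norm_integral_le_of_norm_le
    ((Measure.integrable_toReal_rnDeriv.sub (integrable_const 1)).abs.const_mul M) ?_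
  filter_upwards [hM] with x hx
  rw [norm_smul, Real.norm_eq_abs, mul_comm]
  exact mul_le_mul_of_nonneg_right hx (abs_nonneg _)

end TotalVariation

section VanishingDivergence

variable {ι : Type*} {l : Filter ι} {E : ι → Type*} [∀ i, MeasurableSpace (E i)]
  {μ ν : ∀ i, Measure (E i)} [∀ i, IsProbabilityMeasure (μ i)] [∀ i, IsProbabilityMeasure (ν i)]

theorem tendsto_integral_abs_rnDeriv_sub_one (h : Tendsto (fun i ↦ klDiv (μ i) (ν i)) l (𝓝 0)) :
    Tendsto (fun i ↦ ∫ x, |((μ i).rnDeriv (ν i) x).toReal - 1| ∂ν i) l (𝓝 0) := by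
  have hsqrt : Tendsto (fun i ↦ √(4 * (klDiv (μ i) (ν i)).toReal)) l (𝓝 0) := by
    simpa using (((ENNReal.tendsto_toReal ENNReal.zero_ne_top).comp h).const_mul 4).sqrt
  refine squeeze_zero' (.of_forall fun i ↦ integral_nonneg fun x ↦ abs_nonneg _) ?_ hsqrt
  filter_upwards [h.eventually_ne ENNReal.zero_ne_top] with i hfin
  refine Real.le_sqrt_of_sq_le ((sq_integral_abs_rnDeriv_sub_one_le hfin).trans_eq ?_)
  simp only [probReal_univ]
  ring

theorem tendsto_integral_sub_integral_of_tendsto_klDiv {G : Type*} [NormedAddCommGroup G]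
    [NormedSpace ℝ G] {F : ∀ i, E i → G} {M : ℝ}
    (h : Tendsto (fun i ↦ klDiv (μ i) (ν i)) l (𝓝 0))
    (hF : ∀ i, AEStronglyMeasurable (F i) (ν i)) (hM : ∀ i, ∀ᵐ x ∂ν i, ‖F i x‖ ≤ M) :
    Tendsto (fun i ↦ ∫ x, F i x ∂μ i - ∫ x, F i x ∂ν i) l (𝓝 0) := by
  refine squeeze_zero_norm' ?_
    (by simpa using (tendsto_integral_abs_rnDeriv_sub_one h).const_mul M)
  filter_upwards [h.eventually_ne ENNReal.zero_ne_top] with i hfin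
  exact norm_integral_sub_integral_le_mul_integral_abs_rnDeriv_sub_one
    (klDiv_ne_top_iff.1 hfin).1 (hF i) (hM i)

theorem tendsto_integral_map_of_tendsto_klDiv {S : Type*} [TopologicalSpace S]
    [MeasurableSpace S] [OpensMeasurableSpace S] {T : ∀ i, E i → S} {g : S →ᵇ ℝ} {c : ℝ}
    (h : Tendsto (fun i ↦ klDiv (μ i) (ν i)) l (𝓝 0)) (hT : ∀ i, AEMeasurable (T i) (ν i))
    (hν : Tendsto (fun i ↦ ∫ t, g t ∂(ν i).map (T i)) l (𝓝 c)) :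
    Tendsto (fun i ↦ ∫ t, g t ∂(μ i).map (T i)) l (𝓝 c) := by
  have hg : Measurable g := g.continuous.measurable
  have hdiff : Tendsto (fun i ↦ ∫ x, g (T i x) ∂μ i - ∫ x, g (T i x) ∂ν i) l (𝓝 0) :=
    tendsto_integral_sub_integral_of_tendsto_klDiv h
      (fun i ↦ (hg.comp_aemeasurable (hT i)).aestronglyMeasurable)
      (fun i ↦ ae_of_all _ fun x ↦ g.norm_coe_le_norm (T i x))
  have hsum := hν.add hdiff
  rw [add_zero] at hsum
  refine hsum.congr' ?_
  filter_upwards [h.eventually_ne ENNReal.zero_ne_top] with i hfin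
  have hac : μ i ≪ ν i := (klDiv_ne_top_iff.1 hfin).1
  rw [integral_map (hT i) hg.aestronglyMeasurable,
    integral_map ((hT i).mono_ac hac) hg.aestronglyMeasurable, add_sub_cancel]

end VanishingDivergence

theorem relEntropy_eq_coe_klDiv {E : Type*} [MeasurableSpace E] {μ ν : Measure E}
    [IsFiniteMeasure μ] [IsFiniteMeasure ν] (hmass : μ Set.univ = ν Set.univ) :
    relEntropy μ ν = (klDiv μ ν : EReal) := by
  rw [relEntropy]
  split_ifs with h
  · obtain ⟨hac, hint⟩ := h
    have hfin : klDiv μ ν ≠ ⊤ := klDiv_ne_top hac ((integrable_rnDeriv_mul_log_iff hac).1 hint)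
    rw [integral_rnDeriv_mul_log hac, ← toReal_klDiv_of_measure_eq hac hmass,
      EReal.coe_ennreal_toReal hfin]
  · have htop : klDiv μ ν = ⊤ := klDiv_eq_top_iff.2 fun hac hllr ↦
      h ⟨hac, (integrable_rnDeriv_mul_log_iff hac).2 hllr⟩
    rw [htop, EReal.coe_ennreal_top]

section ProductMeasure

variable {ι : Type*}

theorem measurePreserving_infinitePi_pi_of_injective {κ : Type*} [Fintype κ] {E : ι → Type*}
    [∀ i, MeasurableSpace (E i)] (μ : ∀ i, Measure (E i)) [∀ i, IsProbabilityMeasure (μ i)]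
    {e : κ → ι} (he : Function.Injective e) :
    MeasurePreserving (fun ω k ↦ ω (e k)) (Measure.infinitePi μ)
      (Measure.pi fun k ↦ μ (e k)) where
  measurable := by fun_prop
  map_eq := by
    rw [Measure.map_infinitePi_infinitePi_of_inj he, Measure.infinitePi_eq_pi]

variable {E S : Type*} [MeasurableSpace E] [MeasurableSpace S] {ρ : Measure E}
  [IsProbabilityMeasure ρ] {f : E → S}

theorem iIndepFun_comp_eval_infinitePi (hf : AEMeasurable f ρ) :
    iIndepFun (fun (i : ι) (ω : ι → E) ↦ f (ω i)) (Measure.infinitePi fun _ ↦ ρ) := by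
  refine (iIndepFun_infinitePi (X := fun _ x ↦ x) fun _ ↦ measurable_id).comp₀ (fun _ ↦ f)
    (fun i ↦ (measurable_pi_apply i).aemeasurable) fun i ↦ ?_
  rwa [(measurePreserving_eval_infinitePi (fun _ ↦ ρ) i).map_eq]

theorem identDistrib_comp_eval_infinitePi (hf : AEMeasurable f ρ) (i : ι) :
    IdentDistrib (fun ω : ι → E ↦ f (ω i)) f (Measure.infinitePi fun _ ↦ ρ) ρ := by
  have heval := measurePreserving_eval_infinitePi (fun _ : ι ↦ ρ) i
  refine (heval.hasLaw.identDistrib .id).comp_of_aemeasurable ?_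
  rwa [heval.map_eq]

end ProductMeasure

section Fluctuation

/-- The normalized fluctuation of the statistic `φ` around `m` along the sample `x` of size `N`:
the map under which `fluctLaw` pushes forward, on an arbitrary space. -/
noncomputable def fluctuation {E : Type*} {N : ℕ} (φ : E → ℝ) (m : ℝ) (x : Fin N → E) : ℝ :=
  ((∑ i, φ (x i)) - N * m) / √N

variable {E : Type*} [MeasurableSpace E] {ρ : Measure E} [IsProbabilityMeasure ρ] {φ : E → ℝ}

theorem aemeasurable_fluctuation (hφ : AEMeasurable φ ρ) (N : ℕ) (m : ℝ) :
    AEMeasurable (fluctuation φ m) (Measure.pi fun _ : Fin N ↦ ρ) := by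
  have hterm (i : Fin N) : AEMeasurable (fun x : Fin N → E ↦ φ (x i)) (Measure.pi fun _ ↦ ρ) :=
    hφ.comp_quasiMeasurePreserving (Measure.quasiMeasurePreserving_eval _ i)
  exact ((Finset.aemeasurable_fun_sum _ fun i _ ↦ hterm i).sub_const _).div_const _

theorem map_fluctuation_pi (hφ : AEMeasurable φ ρ) (N : ℕ) (m : ℝ) :
    (Measure.pi fun _ : Fin N ↦ ρ).map (fluctuation φ m) =
      (Measure.infinitePi fun _ : ℕ ↦ ρ).map
        fun ω ↦ (√N)⁻¹ * (∑ k ∈ Finset.range N, φ (ω k) - N * m) := by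
  have hrestrict := measurePreserving_infinitePi_pi_of_injective (fun _ : ℕ ↦ ρ)
    (Fin.val_injective (n := N))
  have hfluct := aemeasurable_fluctuation hφ N m
  rw [← hrestrict.map_eq] at hfluct ⊢
  rw [AEMeasurable.map_map_of_aemeasurable hfluct hrestrict.aemeasurable]
  congr 1
  ext ω
  simp only [Function.comp_apply, fluctuation, Finset.sum_range, div_eq_inv_mul]

theorem tendstoInDistribution_fluctuation (hφ : MemLp φ 2 ρ) :
    TendstoInDistribution (fun N ↦ fluctuation (N := N) φ (∫ y, φ y ∂ρ)) atTop id
      (fun N ↦ Measure.pi fun _ : Fin N ↦ ρ) (gaussianReal 0 Var[φ; ρ].toNNReal) := by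
  have hmeas : AEMeasurable φ ρ := hφ.aestronglyMeasurable.aemeasurable
  have hident := identDistrib_comp_eval_infinitePi (ι := ℕ) hmeas
  refine ⟨fun N ↦ aemeasurable_fluctuation hmeas N _, aemeasurable_id, ?_⟩
  have hclt := tendstoInDistribution_inv_sqrt_mul_sum_sub (Y := id)
    (by rw [(hident 0).variance_eq]; exact .id) ((hident 0).memLp_iff.2 hφ)
    (iIndepFun_comp_eval_infinitePi hmeas) fun i ↦ (hident i).trans (hident 0).symm
  simpa only [(hident 0).variance_eq, (hident 0).integral_eq, map_fluctuation_pi hmeas]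
    using hclt.tendsto

theorem statement12_general (hφ : MemLp φ 2 ρ) (ρN : (N : ℕ) → Measure (Fin N → E))
    [∀ N, IsProbabilityMeasure (ρN N)]
    (hent : Tendsto (fun N ↦ relEntropy (ρN N) (Measure.pi fun _ ↦ ρ)) atTop (𝓝 0))
    (g : ℝ →ᵇ ℝ) :
    Tendsto (fun N ↦ ∫ t, g t ∂(ρN N).map (fluctuation φ (∫ y, φ y ∂ρ))) atTop
      (𝓝 (∫ t, g t ∂gaussianReal 0 (∫ y, φ y ^ 2 ∂ρ - (∫ y, φ y ∂ρ) ^ 2).toNNReal)) := by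
  have hkl : Tendsto (fun N ↦ klDiv (ρN N) (Measure.pi fun _ ↦ ρ)) atTop (𝓝 0) := by
    simpa only [relEntropy_eq_coe_klDiv (measure_univ.trans measure_univ.symm),
      ← EReal.coe_ennreal_zero, EReal.tendsto_coe_ennreal] using hent
  have hclt := tendstoInDistribution_fluctuation hφ
  refine tendsto_integral_map_of_tendsto_klDiv hkl hclt.forall_aemeasurable ?_
  have hlim := ProbabilityMeasure.tendsto_iff_forall_integral_tendsto.1 hclt.tendsto g
  simpa only [ProbabilityMeasure.coe_mk, Measure.map_id, variance_eq_sub hφ, Pi.pow_apply]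
    using hlim

end Fluctuation

end

/-- **CLT under vanishing relative entropy (from Proposition 6.3 of Wang–Zhao–Zhu).**
Let `ρ̄` be a probability measure on `ℝ^d` and `φ` a Schwartz function with mean
`m = ∫ φ dρ̄` and variance `v = ∫ φ² dρ̄ − m²`; let `G_φ` be the centered Gaussian on `ℝ`
with variance `v`.  If `ρ_N` are probability measures on `(ℝ^d)^N` with
`H(ρ_N | ρ̄^{⊗N}) → 0`, then the laws `T_N ρ_N` of the normalized fluctuations converge
weakly to `G_φ`. -/
theorem statement12 (d : ℕ) (hd : 1 ≤ d)
    (ρ : Measure (EuclideanSpace ℝ (Fin d))) [IsProbabilityMeasure ρ]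
    (φ : SchwartzMap (EuclideanSpace ℝ (Fin d)) ℝ)
    (ρN : (N : ℕ) → Measure (Fin N → EuclideanSpace ℝ (Fin d)))
    (hprob : ∀ N, IsProbabilityMeasure (ρN N))
    (hent : Tendsto (fun N => relEntropy (ρN N) (Measure.pi fun _ => ρ))
      atTop (nhds (0 : EReal))) :
    ∀ g : BoundedContinuousFunction ℝ ℝ,
      Tendsto
        (fun N => ∫ t, g t ∂(fluctLaw d N φ (∫ y, φ y ∂ρ) (ρN N)))
        atTop
        (nhds (∫ t, g t
          ∂(ProbabilityTheory.gaussianReal 0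
              (Real.toNNReal (∫ y, (φ y) ^ 2 ∂ρ - (∫ y, φ y ∂ρ) ^ 2))))) := by
  exact statement12_general (φ.memLp 2 ρ) ρN hent
end

section
/- Let (E, ℰ) be a measurable space, let ρ̄ be a probability measure on E, and let φ : E → ℝ be a bounded measurable function with m := ∫ φ dρ̄. Then there exist constants a > 0 and M < ∞, depending only on ‖φ‖_{L^∞}, such that for every integer N ≥ 2: ∫_{E^N} exp( (a/N) | Σ_{i=1}^N (φ(x_i) − m) |² ) dρ̄^{⊗N}(x_1,…,x_N) ≤ M. -/
open MeasureTheory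

universe u

/-!
The proof linearizes the square with an auxiliary Gaussian: if `G` has law `N(0, v)`, then
`exp (v x² / 2) = 𝔼 exp (x G)`. For a sub-Gaussian `X` with parameter `c`, Tonelli's theorem gives
`𝔼 exp (v X² / 2) = 𝔼_G 𝔼_X exp (G X) ≤ 𝔼 exp (c G² / 2) = (1 - v c)^(-1/2)` as soon as `v c < 1`.
By Hoeffding's lemma, the sum of `N` independent centered variables with values in `[l, u]` is
sub-Gaussian with parameter `N (u - l)² / 4`, so for `v = 2 a / N` the product
`v c = a (u - l)² / 2` does not depend on `N`.
-/

open ProbabilityTheory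
open scoped NNReal

/-- If `1 ≤ v * c`, both sides are zero by convention: the integral diverges and the square root is
that of a nonpositive number. -/
lemma integral_exp_mul_sq_gaussianReal_s13 (v : ℝ≥0) (c : ℝ) :
    ∫ t, Real.exp (c * t ^ 2 / 2) ∂gaussianReal 0 v = (√(1 - v * c))⁻¹ := by
  obtain rfl | hv := eq_or_ne v 0
  · simp
  have : (0 : ℝ) < v := by positivity
  have completed_exponent (t : ℝ) :
      gaussianPDFReal 0 v t • Real.exp (c * t ^ 2 / 2) =
        (√(2 * Real.pi * v))⁻¹ * Real.exp (-((1 - v * c) / (2 * v)) * t ^ 2) := by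
    rw [gaussianPDFReal, smul_eq_mul, mul_assoc, ← Real.exp_add]
    congr 2
    field_simp
    ring
  simp_rw [integral_gaussianReal_eq_integral_smul hv, completed_exponent]
  rw [integral_const_mul, integral_gaussian, ← Real.sqrt_inv, ← Real.sqrt_inv,
    ← Real.sqrt_mul (by positivity)]
  congr 1
  field_simp

lemma ofReal_exp_mul_sq_eq_lintegral_gaussianReal (v : ℝ≥0) (x : ℝ) :
    ENNReal.ofReal (Real.exp (v * x ^ 2 / 2)) =
      ∫⁻ t, ENNReal.ofReal (Real.exp (t * x)) ∂gaussianReal 0 v := by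
  have h_mgf : ∫ t, Real.exp (x * t) ∂gaussianReal 0 v = Real.exp (v * x ^ 2 / 2) := by
    simpa [mgf] using congrFun (mgf_fun_id_gaussianReal (μ := 0) (v := v)) x
  simp_rw [mul_comm _ x]
  rw [← ofReal_integral_eq_lintegral_ofReal (integrable_exp_mul_gaussianReal x)
    (ae_of_all _ fun _ ↦ Real.exp_nonneg _), h_mgf]

section SubGaussian

variable {Ω : Type*} {mΩ : MeasurableSpace Ω} {μ : Measure Ω} {X : Ω → ℝ} {c v : ℝ≥0}

lemma isFiniteMeasure_of_hasSubgaussianMGF (hX : HasSubgaussianMGF X c μ) :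
    IsFiniteMeasure μ := by
  have h_one : Integrable (fun _ : Ω ↦ (1 : ℝ)) μ := by simpa using hX.integrable_exp_mul 0
  exact (integrable_const_iff_isFiniteMeasure one_ne_zero).1 h_one

lemma lintegral_exp_mul_le_of_hasSubgaussianMGF (hX : HasSubgaussianMGF X c μ) (t : ℝ) :
    ∫⁻ ω, ENNReal.ofReal (Real.exp (t * X ω)) ∂μ ≤ ENNReal.ofReal (Real.exp (c * t ^ 2 / 2)) := by
  rw [← ofReal_integral_eq_lintegral_ofReal (hX.integrable_exp_mul t)
    (ae_of_all _ fun _ ↦ Real.exp_nonneg _)]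
  exact ENNReal.ofReal_le_ofReal (hX.mgf_le t)

lemma lintegral_exp_mul_sq_le_of_hasSubgaussianMGF (hX : HasSubgaussianMGF X c μ)
    (hvc : v * c < 1) :
    ∫⁻ ω, ENNReal.ofReal (Real.exp (v * X ω ^ 2 / 2)) ∂μ ≤
      ENNReal.ofReal (√(1 - v * c))⁻¹ := by
  have := isFiniteMeasure_of_hasSubgaussianMGF hX
  have h_pos : (0 : ℝ) < 1 - v * c := sub_pos.2 (mod_cast hvc)
  have h_int : Integrable (fun t : ℝ ↦ Real.exp (c * t ^ 2 / 2)) (gaussianReal 0 v) := by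
    refine .of_integral_ne_zero ?_
    rw [integral_exp_mul_sq_gaussianReal_s13]
    positivity
  have h_meas : AEMeasurable
      (Function.uncurry fun ω t ↦ ENNReal.ofReal (Real.exp (t * X ω)))
      (μ.prod (gaussianReal 0 v)) :=
    (measurable_snd.aemeasurable.mul hX.aemeasurable.comp_fst).exp.ennreal_ofReal
  calc ∫⁻ ω, ENNReal.ofReal (Real.exp (v * X ω ^ 2 / 2)) ∂μ
      = ∫⁻ ω, ∫⁻ t, ENNReal.ofReal (Real.exp (t * X ω)) ∂gaussianReal 0 v ∂μ := by
        simp_rw [ofReal_exp_mul_sq_eq_lintegral_gaussianReal]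
    _ = ∫⁻ t, ∫⁻ ω, ENNReal.ofReal (Real.exp (t * X ω)) ∂μ ∂gaussianReal 0 v :=
        lintegral_lintegral_swap h_meas
    _ ≤ ∫⁻ t, ENNReal.ofReal (Real.exp (c * t ^ 2 / 2)) ∂gaussianReal 0 v :=
        lintegral_mono (lintegral_exp_mul_le_of_hasSubgaussianMGF hX)
    _ = ENNReal.ofReal (√(1 - v * c))⁻¹ := by
        rw [← ofReal_integral_eq_lintegral_ofReal h_int (ae_of_all _ fun _ ↦ Real.exp_nonneg _),
          integral_exp_mul_sq_gaussianReal_s13]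

lemma integral_exp_mul_sq_le_of_hasSubgaussianMGF_s13 (hX : HasSubgaussianMGF X c μ)
    (hvc : v * c < 1) :
    ∫ ω, Real.exp (v * X ω ^ 2 / 2) ∂μ ≤ (√(1 - v * c))⁻¹ := by
  have h_meas : AEMeasurable (fun ω ↦ Real.exp (v * X ω ^ 2 / 2)) μ := by
    have := hX.aemeasurable
    fun_prop
  rw [integral_eq_lintegral_of_nonneg_ae (ae_of_all _ fun _ ↦ Real.exp_nonneg _)
    h_meas.aestronglyMeasurable]
  exact ENNReal.toReal_le_of_le_ofReal (by positivity)
    (lintegral_exp_mul_sq_le_of_hasSubgaussianMGF hX hvc)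

end SubGaussian

section Independent

variable {Ω ι : Type*} {mΩ : MeasurableSpace Ω} {μ : Measure Ω} [Fintype ι] {X : ι → Ω → ℝ}
  {l u : ℝ}

lemma hasSubgaussianMGF_sum_sub_integral (hX_indep : iIndepFun X μ)
    (hX_meas : ∀ i, AEMeasurable (X i) μ) (hX_mem : ∀ i, ∀ᵐ ω ∂μ, X i ω ∈ Set.Icc l u) :
    HasSubgaussianMGF (fun ω ↦ ∑ i, (X i ω - ∫ ω', X i ω' ∂μ))
      (Fintype.card ι * (‖u - l‖₊ / 2) ^ 2) μ := by
  have := hX_indep.isProbabilityMeasure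
  have h_centered : iIndepFun (fun i ω ↦ X i ω - ∫ ω', X i ω' ∂μ) μ :=
    hX_indep.comp (fun i x ↦ x - ∫ ω', X i ω' ∂μ) fun _ ↦ by fun_prop
  simpa using HasSubgaussianMGF.sum_of_iIndepFun h_centered (s := Finset.univ)
    fun i _ ↦ hasSubgaussianMGF_of_mem_Icc (hX_meas i) (hX_mem i)

theorem statement13_general [Nonempty ι] {a : ℝ} (hX_indep : iIndepFun X μ)
    (hX_meas : ∀ i, AEMeasurable (X i) μ) (hX_mem : ∀ i, ∀ᵐ ω ∂μ, X i ω ∈ Set.Icc l u)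
    (ha : 0 ≤ a) (hal : a * (u - l) ^ 2 / 2 < 1) :
    ∫ ω, Real.exp (a / Fintype.card ι * |∑ i, (X i ω - ∫ ω', X i ω' ∂μ)| ^ 2) ∂μ ≤
      (√(1 - a * (u - l) ^ 2 / 2))⁻¹ := by
  lift a to ℝ≥0 using ha
  set v : ℝ≥0 := 2 * a / Fintype.card ι with hv
  set c : ℝ≥0 := Fintype.card ι * (‖u - l‖₊ / 2) ^ 2 with hc
  have h_prod : (v * c : ℝ) = a * (u - l) ^ 2 / 2 := by
    simp only [hv, hc, NNReal.coe_div, NNReal.coe_mul, NNReal.coe_pow, NNReal.coe_ofNat,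
      NNReal.coe_natCast, coe_nnnorm, Real.norm_eq_abs, div_pow, sq_abs]
    field_simp
  have h_exponent (s : ℝ) : a / Fintype.card ι * |s| ^ 2 = v * s ^ 2 / 2 := by
    simp only [hv, NNReal.coe_div, NNReal.coe_mul, NNReal.coe_ofNat, NNReal.coe_natCast, sq_abs]
    ring
  simp_rw [h_exponent, ← h_prod]
  refine integral_exp_mul_sq_le_of_hasSubgaussianMGF_s13
    (hasSubgaussianMGF_sum_sub_integral hX_indep hX_meas hX_mem) ?_
  exact_mod_cast h_prod.trans_lt hal

end Independent

/-- **Uniform-in-`N` Gaussian concentration of the normalized fluctuation of the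
empirical average.**  For every bound `B` there are constants `a > 0` and `M < ∞`,
depending only on `B` (a bound on `‖φ‖_∞`), such that for every measurable space `E`,
every probability measure `ρ̄` on `E`, every measurable `φ : E → ℝ` with `|φ| ≤ B` and
mean `m = ∫ φ dρ̄`, and every integer `N ≥ 2`:
`∫ exp((a/N)|∑_{i=1}^N (φ(x_i) − m)|²) dρ̄^{⊗N} ≤ M`. -/
theorem statement13 :
    ∀ B : ℝ, ∃ a : ℝ, 0 < a ∧ ∃ M : ℝ,
      ∀ (E : Type u) (_ : MeasurableSpace E)
        (ρ : Measure E), IsProbabilityMeasure ρ →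
      ∀ φ : E → ℝ, Measurable φ → (∀ x, |φ x| ≤ B) →
      ∀ N : ℕ, 2 ≤ N →
        ∫ x : Fin N → E,
            Real.exp (a / N * |∑ i, (φ (x i) - ∫ y, φ y ∂ρ)| ^ 2)
          ∂(Measure.pi fun _ => ρ)
        ≤ M := by
  intro B
  obtain ⟨a, ha, haB⟩ : ∃ a : ℝ, 0 < a ∧ a * (B - -B) ^ 2 / 2 < 1 :=
    ⟨((B - -B) ^ 2 + 1)⁻¹, by positivity, by field_simp; nlinarith [sq_nonneg B]⟩
  refine ⟨a, ha, (√(1 - a * (B - -B) ^ 2 / 2))⁻¹, fun E _ ρ _ φ hφ hB N hN ↦ ?_⟩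
  have : Nonempty (Fin N) := ⟨0, by lia⟩
  have h_mean (i : Fin N) : ∫ x, φ (x i) ∂(Measure.pi fun _ ↦ ρ) = ∫ y, φ y ∂ρ :=
    integral_comp_eval hφ.aestronglyMeasurable
  simpa only [h_mean, Fintype.card_fin] using statement13_general
    (iIndepFun_pi (μ := fun _ : Fin N ↦ ρ) fun _ ↦ hφ.aemeasurable)
    (fun i ↦ (hφ.comp (measurable_pi_apply i)).aemeasurable)
    (fun i ↦ ae_of_all _ fun x ↦ abs_le.1 (hB (x i))) ha.le haB
end

section
/- Let E be a standard Borel (Polish) space, let ρ̄ be a probability measure on E, let N ≥ k ≥ 1 be integers, and let ρ_N be an exchangeable probability measure on E^N, i.e. invariant under every permutation of the N coordinates. Let ρ_{N,k} denote the marginal of ρ_N on the first k coordinates. Then ‖ρ_{N,k} − ρ̄^{⊗k}‖_{TV} ≤ √( 2 H( ρ_{N,k} | ρ̄^{⊗k} ) ) ≤ √( 2 (k/N) H( ρ_N | ρ̄^{⊗N} ) ); in particular H( ρ_{N,k} | ρ̄^{⊗k} ) ≤ (k/N) H( ρ_N | ρ̄^{⊗N} ). -/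
open MeasureTheory Classical

/-- The total variation norm `‖μ − ν‖_TV = |μ − ν|(E)` of the difference of two finite
measures, i.e. the total mass of the total-variation measure of the signed measure
`μ − ν`. -/
noncomputable def tvNorm {E : Type*} [MeasurableSpace E]
    (μ ν : Measure E) [IsFiniteMeasure μ] [IsFiniteMeasure ν] : ℝ :=
  ((μ.toSignedMeasure - ν.toSignedMeasure).totalVariation Set.univ).toReal

/-!
Split off the coordinates one at a time: by the chain rule, `H(ρ_{N,k} | ρ̄^{⊗k})` is the sum over
`j < k` of the conditional relative entropies `d_j` of `x_j` given `(x_i)_{i < j}`. By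
exchangeability, for `i ≤ j` the pair `((x_l)_{l < i}, x_i)` has the law of
`((x_l)_{l < i}, x_j)`, which is obtained from `((x_l)_{l < j}, x_j)` by forgetting coordinates, so
the data processing inequality gives `d_i ≤ d_j`. The average of the first `k` terms of a
nondecreasing sequence is at most the average of the first `N`.

Pinsker's inequality comes from the pointwise bound `3 (t - 1)² ≤ (2 t + 4) (t log t + 1 - t)` at
`t = dμ/dν`: by AM-GM it gives `2 c |t - 1| ≤ c² (2 t + 4) / 3 + (t log t + 1 - t)`, in which the
first summand on the right has `ν`-integral `2 c²`.
-/

open InformationTheory ProbabilityTheory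

section Pinsker

-- The difference of the two sides is convex, and it has a critical point with value `0` at `t = 1`.
lemma three_mul_sub_one_sq_le_mul_klFun {t : ℝ} (ht : 0 ≤ t) :
    3 * (t - 1) ^ 2 ≤ (2 * t + 4) * klFun t := by
  let F : ℝ → ℝ := fun x => (2 * x + 4) * klFun x - 3 * (x - 1) ^ 2
  let F' : ℝ → ℝ := fun x => 2 * klFun x + (2 * x + 4) * Real.log x - 6 * (x - 1)
  have hF : ∀ x, 0 < x → HasDerivAt F (F' x) x := fun x hx => by
    refine (((((hasDerivAt_id x).const_mul 2).add_const 4).mul (hasDerivAt_klFun hx.ne')).sub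
      ((((hasDerivAt_id x).sub_const 1).pow 2).const_mul 3)).congr_deriv ?_
    simp only [mul_one, id_eq, Nat.cast_ofNat, Nat.add_one_sub_one, pow_one, sub_right_inj, F']
    ring
  have hF' : ∀ x, 0 < x → HasDerivAt F' (4 * (Real.log x - (1 - x⁻¹))) x := fun x hx => by
    refine ((((hasDerivAt_klFun hx.ne').const_mul 2).add
      ((((hasDerivAt_id x).const_mul 2).add_const 4).mul (Real.hasDerivAt_log hx.ne'))).sub
      (((hasDerivAt_id x).sub_const 1).const_mul 6)).congr_deriv ?_
    simp only [mul_one, id_eq]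
    field_simp
    ring
  have hconvex : ConvexOn ℝ (Set.Ici 0) F := by
    refine convexOn_of_hasDerivWithinAt2_nonneg (f' := F')
      (f'' := fun x => 4 * (Real.log x - (1 - x⁻¹))) (convex_Ici 0)
      (by fun_prop) ?_ ?_ ?_ <;> rw [interior_Ici] <;> intro x hx
    · exact (hF x hx).hasDerivWithinAt
    · exact (hF' x hx).hasDerivWithinAt
    · linarith [Real.one_sub_inv_le_log_of_pos hx]
  have hmin : IsMinOn F (Set.Ici 0) 1 := by
    refine hconvex.isMinOn_of_rightDeriv_eq_zero (by simp) ?_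
    rw [(hF 1 one_pos).hasDerivWithinAt.derivWithin (uniqueDiffWithinAt_Ioi 1)]
    simp [F', klFun_one]
  have hle : F 1 ≤ F t := hmin ht
  simp only [F, klFun_one] at hle
  linarith

lemma two_mul_abs_sub_one_le_add_klFun {t : ℝ} (ht : 0 ≤ t) (c : ℝ) :
    2 * c * |t - 1| ≤ c ^ 2 * ((2 * t + 4) / 3) + klFun t := by
  set a := (2 * t + 4) / 3 with ha_def
  have ha : 0 < a := by positivity
  have hsq : |t - 1| ^ 2 ≤ a * klFun t := by
    rw [sq_abs, ha_def]
    linarith [three_mul_sub_one_sq_le_mul_klFun ht]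
  refine le_of_mul_le_mul_left ?_ ha
  linarith [sq_nonneg (c * a - |t - 1|)]

variable {α : Type*} [MeasurableSpace α]

lemma totalVariation_withDensityᵥ {ν : Measure α} {f : α → ℝ} (hf : Measurable f)
    (hfi : Integrable f ν) :
    SignedMeasure.totalVariation (ν.withDensityᵥ f) = ν.withDensity fun x => ‖f x‖ₑ := by
  have := isFiniteMeasure_withDensity_ofReal hfi.2
  have := isFiniteMeasure_withDensity_ofReal hfi.neg.2
  let J : JordanDecomposition α :=
    { posPart := ν.withDensity fun x => ENNReal.ofReal (f x)
      negPart := ν.withDensity fun x => ENNReal.ofReal (-f x)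
      mutuallySingular := withDensity_ofReal_mutuallySingular hf }
  have hJ : SignedMeasure.toJordanDecomposition (ν.withDensityᵥ f) = J :=
    SignedMeasure.toJordanDecomposition_eq
      (withDensityᵥ_eq_withDensity_pos_part_sub_withDensity_neg_part hfi)
  rw [SignedMeasure.totalVariation, hJ]
  change (ν.withDensity _ + ν.withDensity _) = _
  rw [← withDensity_add_left hf.ennreal_ofReal]
  congr 1
  ext x
  rcases le_total 0 (f x) with h | h <;>
    simp [Real.enorm_eq_ofReal_abs, abs_of_nonneg, abs_of_nonpos, h]

lemma toSignedMeasure_sub_eq_withDensityᵥ {μ ν : Measure α} [IsFiniteMeasure μ]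
    [IsFiniteMeasure ν] (hμν : μ ≪ ν) :
    μ.toSignedMeasure - ν.toSignedMeasure
      = ν.withDensityᵥ fun x => (μ.rnDeriv ν x).toReal - 1 := by
  have hint : Integrable (fun x => (μ.rnDeriv ν x).toReal) ν := Measure.integrable_toReal_rnDeriv
  have hsub : Integrable (fun x => (μ.rnDeriv ν x).toReal - 1) ν := by fun_prop
  ext s hs
  rw [withDensityᵥ_apply hsub hs, integral_sub hint.integrableOn (integrable_const 1),
    Measure.setIntegral_toReal_rnDeriv hμν]
  simp [Measure.toSignedMeasure_apply_measurable hs]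

lemma tvNorm_eq_integral_abs_rnDeriv_sub_one {μ ν : Measure α} [IsFiniteMeasure μ]
    [IsFiniteMeasure ν] (hμν : μ ≪ ν) :
    tvNorm μ ν = ∫ x, |(μ.rnDeriv ν x).toReal - 1| ∂ν := by
  have hint : Integrable (fun x => (μ.rnDeriv ν x).toReal - 1) ν :=
    Measure.integrable_toReal_rnDeriv.sub (integrable_const 1)
  rw [tvNorm, toSignedMeasure_sub_eq_withDensityᵥ hμν,
    totalVariation_withDensityᵥ (by fun_prop) hint, withDensity_apply _ .univ,
    setLIntegral_univ, ← integral_norm_eq_lintegral_enorm hint.aestronglyMeasurable]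
  rfl

lemma tvNorm_sq_le_two_mul_klDiv {μ ν : Measure α} [IsProbabilityMeasure μ]
    [IsProbabilityMeasure ν] (h : klDiv μ ν ≠ ⊤) :
    tvNorm μ ν ^ 2 ≤ 2 * (klDiv μ ν).toReal := by
  obtain ⟨hμν, hllr⟩ := klDiv_ne_top_iff.1 h
  set f : α → ℝ := fun x => (μ.rnDeriv ν x).toReal
  -- The bound integrates to `2 * c * tvNorm μ ν ≤ 2 * c ^ 2 + (klDiv μ ν).toReal`; this is the best
  -- choice of `c`.
  set c := tvNorm μ ν / 2 with hc
  have hf : Integrable f ν := Measure.integrable_toReal_rnDeriv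
  have hf_one : ∫ x, f x ∂ν = 1 := by simp [f, Measure.integral_toReal_rnDeriv hμν]
  have hweight : Integrable (fun x => c ^ 2 * ((2 * f x + 4) / 3)) ν := by fun_prop
  have hklFun : Integrable (fun x => klFun (f x)) ν := (integrable_klFun_rnDeriv_iff hμν).2 hllr
  have hle : ∫ x, 2 * c * |f x - 1| ∂ν ≤ ∫ x, (c ^ 2 * ((2 * f x + 4) / 3) + klFun (f x)) ∂ν :=
    integral_mono (by fun_prop) (hweight.add hklFun)
      fun x => two_mul_abs_sub_one_le_add_klFun ENNReal.toReal_nonneg c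
  have hweight_eq : ∫ x, c ^ 2 * ((2 * f x + 4) / 3) ∂ν = 2 * c ^ 2 := by
    rw [integral_const_mul, integral_div, integral_add (by fun_prop) (by fun_prop),
      integral_const_mul, hf_one, integral_const, probReal_univ, smul_eq_mul]
    ring
  rw [integral_const_mul, integral_add hweight hklFun, hweight_eq,
    ← tvNorm_eq_integral_abs_rnDeriv_sub_one hμν, ← toReal_klDiv_eq_integral_klFun hμν] at hle
  rw [hc] at hle
  linarith

lemma relEntropy_eq_klDiv_s14 {μ ν : Measure α} [IsFiniteMeasure μ] [IsFiniteMeasure ν]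
    (h : μ Set.univ = ν Set.univ) : relEntropy μ ν = (klDiv μ ν : EReal) := by
  unfold relEntropy
  by_cases hac : μ ≪ ν
  · rw [integrable_rnDeriv_mul_log_iff hac]
    by_cases hllr : Integrable (llr μ ν) μ
    · have hlog : ∫ x, (μ.rnDeriv ν x).toReal * Real.log (μ.rnDeriv ν x).toReal ∂ν
          = (klDiv μ ν).toReal := by
        rw [toReal_klDiv_of_measure_eq hac h]
        exact integral_rnDeriv_smul hac
      rw [if_pos ⟨hac, hllr⟩, hlog, EReal.coe_ennreal_toReal (klDiv_ne_top hac hllr)]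
    · simp [hllr, klDiv_of_not_integrable]
  · simp [hac, klDiv_of_not_ac]

lemma tvNorm_sq_le_two_mul_relEntropy (μ ν : Measure α) [IsProbabilityMeasure μ]
    [IsProbabilityMeasure ν] :
    ((tvNorm μ ν ^ 2 : ℝ) : EReal) ≤ ((2 : ℝ) : EReal) * relEntropy μ ν := by
  rw [relEntropy_eq_klDiv_s14 (by simp)]
  by_cases h : klDiv μ ν = ⊤
  · simp [h, EReal.coe_mul_top_of_pos]
  · rw [← ENNReal.ofReal_toReal h, EReal.coe_ennreal_ofReal, max_eq_left ENNReal.toReal_nonneg]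
    exact_mod_cast tvNorm_sq_le_two_mul_klDiv h

end Pinsker

section ChainRule

lemma klDiv_map_measurableEquiv {α β : Type*} [MeasurableSpace α] [MeasurableSpace β]
    (μ ν : Measure α) [IsFiniteMeasure μ] [IsFiniteMeasure ν] (e : α ≃ᵐ β) :
    klDiv (μ.map e) (ν.map e) = klDiv μ ν := by
  refine le_antisymm (klDiv_map_le μ ν e.measurable) ?_
  simpa [Measure.map_map e.symm.measurable e.measurable] using
    klDiv_map_le (μ.map e) (ν.map e) e.symm.measurable

lemma klDiv_prod_right_eq_add {α β : Type*} [MeasurableSpace α] [MeasurableSpace β]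
    [StandardBorelSpace β] (μ : Measure (α × β)) [IsFiniteMeasure μ]
    (ν : Measure α) [IsFiniteMeasure ν] (ρ : Measure β) [IsProbabilityMeasure ρ] :
    klDiv μ (ν.prod ρ) = klDiv μ.fst ν + klDiv μ (μ.fst.prod ρ) := by
  have : Nonempty β := ρ.nonempty_of_neZero
  have h := klDiv_compProd_eq_add μ.fst ν μ.condKernel (Kernel.const α ρ)
  rwa [μ.disintegrate, Measure.compProd_const, Measure.compProd_const] at h

variable {E : Type*} [MeasurableSpace E] {N : ℕ}

/-- The law `P_k` of the first `k` of `N` coordinates, for `k ≤ N`. -/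
noncomputable def initialMarginal (P : Measure (Fin N → E)) {k : ℕ} (h : k ≤ N) :
    Measure (Fin k → E) :=
  P.map fun x i => x (Fin.castLE h i)

/-- The conditional relative entropy of the coordinate `x_j` given `(x_i)_{i < j}` with respect to
`ν`. It is encoded without conditional laws, as the relative entropy of the law of
`((x_i)_{i < j}, x_j)` with respect to `P_j ⊗ ν`. -/
noncomputable def condKLDiv (P : Measure (Fin N → E)) (ν : Measure E) (j : Fin N) : ENNReal :=
  klDiv (P.map fun x => (fun i : Fin j => x (Fin.castLE j.is_le' i), x j))
    ((initialMarginal P j.is_le').prod ν)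

instance (P : Measure (Fin N → E)) [IsFiniteMeasure P] {k : ℕ} (h : k ≤ N) :
    IsFiniteMeasure (initialMarginal P h) := by
  unfold initialMarginal
  infer_instance

instance (P : Measure (Fin N → E)) [IsProbabilityMeasure P] {k : ℕ} (h : k ≤ N) :
    IsProbabilityMeasure (initialMarginal P h) :=
  Measure.isProbabilityMeasure_map (Measurable.aemeasurable (by fun_prop))

lemma initialMarginal_self (P : Measure (Fin N → E)) : initialMarginal P le_rfl = P :=
  Measure.map_id

lemma map_initialMarginal_castLE (P : Measure (Fin N → E)) {j k : ℕ} (hjk : j ≤ k) (hk : k ≤ N) :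
    (initialMarginal P hk).map (fun x i => x (Fin.castLE hjk i))
      = initialMarginal P (hjk.trans hk) := by
  rw [initialMarginal, Measure.map_map (by fun_prop) (by fun_prop)]
  rfl

/-- Splits off the last coordinate. -/
def splitLast (E : Type*) [MeasurableSpace E] (n : ℕ) : (Fin (n + 1) → E) ≃ᵐ (Fin n → E) × E :=
  (MeasurableEquiv.piFinSuccAbove (fun _ => E) (Fin.last n)).trans MeasurableEquiv.prodComm

lemma measurePreserving_splitLast {n : ℕ} (ρ : Fin (n + 1) → Measure E) [∀ i, SigmaFinite (ρ i)] :
    MeasurePreserving (splitLast E n) (Measure.pi ρ)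
      ((Measure.pi fun i => ρ (Fin.castSucc i)).prod (ρ (Fin.last n))) := by
  have h := Measure.measurePreserving_swap.comp
    (measurePreserving_piFinSuccAbove ρ (Fin.last n))
  simp only [Fin.succAbove_last] at h
  exact h

lemma klDiv_initialMarginal_succ [StandardBorelSpace E] (P : Measure (Fin N → E))
    [IsFiniteMeasure P] (ρ : Fin N → Measure E) [∀ i, IsProbabilityMeasure (ρ i)]
    {k : ℕ} (h : k + 1 ≤ N) :
    klDiv (initialMarginal P h) (Measure.pi fun i => ρ (Fin.castLE h i))
      = klDiv (initialMarginal P (Nat.le_of_succ_le h))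
          (Measure.pi fun i => ρ (Fin.castLE (Nat.le_of_succ_le h) i))
        + condKLDiv P (ρ ⟨k, h⟩) ⟨k, h⟩ := by
  have hlaw : (initialMarginal P h).map (splitLast E k)
      = P.map fun x => (fun i : Fin k => x (Fin.castLE (Nat.le_of_succ_le h) i), x ⟨k, h⟩) := by
    rw [initialMarginal, Measure.map_map (splitLast E k).measurable (by fun_prop)]
    congr 1
    ext x i
    · exact congrArg (fun l => x (Fin.castLE h l)) (Fin.succAbove_last_apply i)
    · rfl
  have hfst : ((initialMarginal P h).map (splitLast E k)).fst
      = initialMarginal P (Nat.le_of_succ_le h) := by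
    rw [hlaw, Measure.fst, Measure.map_map measurable_fst (by fun_prop)]
    rfl
  rw [← klDiv_map_measurableEquiv _ _ (splitLast E k), (measurePreserving_splitLast _).map_eq,
    klDiv_prod_right_eq_add, hfst, hlaw]
  rfl

theorem klDiv_initialMarginal_eq_sum [StandardBorelSpace E] (P : Measure (Fin N → E))
    [IsProbabilityMeasure P] (ρ : Fin N → Measure E) [∀ i, IsProbabilityMeasure (ρ i)]
    {k : ℕ} (h : k ≤ N) :
    klDiv (initialMarginal P h) (Measure.pi fun i => ρ (Fin.castLE h i))
      = ∑ j : Fin k, condKLDiv P (ρ (Fin.castLE h j)) (Fin.castLE h j) := by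
  induction k with
  | zero =>
    have heq : Measure.pi (fun i => ρ (Fin.castLE h i)) = initialMarginal P h :=
      Measure.pi_eq fun s _ => by simp [Set.pi]
    rw [heq, klDiv_self, Finset.univ_eq_empty, Finset.sum_empty]
  | succ k ih =>
    rw [klDiv_initialMarginal_succ, ih, Fin.sum_univ_castSucc]
    rfl

end ChainRule

section Exchangeable

/-- A law on `E ^ ι` is exchangeable if it is invariant under all permutations of the
coordinates. -/
def Exchangeable {ι E : Type*} [MeasurableSpace E] (P : Measure (ι → E)) : Prop :=
  ∀ σ : Equiv.Perm ι, P.map (fun x => x ∘ σ) = P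

variable {E : Type*} [MeasurableSpace E] {N : ℕ} {P : Measure (Fin N → E)}

lemma Exchangeable.map_init_prodMk_eq (hP : Exchangeable P) {i j : Fin N} (hij : i ≤ j) :
    P.map (fun x => (fun l : Fin i => x (Fin.castLE i.is_le' l), x i))
      = P.map (fun x => (fun l : Fin i => x (Fin.castLE i.is_le' l), x j)) := by
  conv_lhs => rw [← hP (Equiv.swap i j), Measure.map_map (by fun_prop) (by fun_prop)]
  congr 1
  ext x l
  · have hl : Fin.castLE i.is_le' l < i := l.is_lt
    simp [Equiv.swap_apply_of_ne_of_ne hl.ne (hl.trans_le hij).ne]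
  · simp

theorem Exchangeable.monotone_condKLDiv [IsFiniteMeasure P] (hP : Exchangeable P)
    (ν : Measure E) [IsFiniteMeasure ν] : Monotone (condKLDiv P ν) := by
  intro i j hij
  let forget : (Fin j → E) × E → (Fin i → E) × E := Prod.map (fun x l => x (Fin.castLE hij l)) id
  have hforget : Measurable forget := by fun_prop
  have hlaw : P.map (fun x => (fun l : Fin i => x (Fin.castLE i.is_le' l), x i))
      = (P.map fun x => (fun l : Fin j => x (Fin.castLE j.is_le' l), x j)).map forget := by
    rw [hP.map_init_prodMk_eq hij, Measure.map_map hforget (by fun_prop)]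
    rfl
  have hprod : (initialMarginal P i.is_le').prod ν
      = ((initialMarginal P j.is_le').prod ν).map forget := by
    rw [← Measure.map_prod_map _ _ (by fun_prop) measurable_id, Measure.map_id,
      map_initialMarginal_castLE]
  rw [condKLDiv, hlaw, hprod]
  exact klDiv_map_le _ _ hforget

lemma card_mul_sum_le_card_mul_sum {ι R : Type*} [CommSemiring R] [PartialOrder R]
    [IsOrderedRing R] {s t : Finset ι} (hst : s ⊆ t) {d : ι → R}
    (hd : ∀ i ∈ s, ∀ j ∈ t, j ∉ s → d i ≤ d j) :
    (t.card : R) * ∑ i ∈ s, d i ≤ s.card * ∑ j ∈ t, d j := by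
  have hcross : ((t \ s).card : R) * ∑ i ∈ s, d i ≤ s.card * ∑ j ∈ t \ s, d j := by
    rw [← nsmul_eq_mul, ← nsmul_eq_mul, ← Finset.sum_const, ← Finset.sum_const, Finset.sum_comm]
    exact Finset.sum_le_sum fun i hi => Finset.sum_le_sum fun j hj =>
      hd i hi j (Finset.mem_sdiff.1 hj).1 (Finset.mem_sdiff.1 hj).2
  rw [← Finset.card_sdiff_add_card_eq_card hst, ← Finset.sum_sdiff hst, Nat.cast_add, add_mul,
    mul_add]
  gcongr

theorem Exchangeable.klDiv_initialMarginal_le [StandardBorelSpace E] [IsProbabilityMeasure P]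
    (hP : Exchangeable P) (ρ : Measure E) [IsProbabilityMeasure ρ] {k : ℕ} (h : k ≤ N) :
    N * klDiv (initialMarginal P h) (Measure.pi fun _ => ρ)
      ≤ k * klDiv P (Measure.pi fun _ => ρ) := by
  have hN := klDiv_initialMarginal_eq_sum P (fun _ => ρ) (le_refl N)
  simp only [initialMarginal_self, Fin.castLE_refl] at hN
  rw [klDiv_initialMarginal_eq_sum P (fun _ => ρ) h, hN]
  have hcross : ∀ i ∈ Finset.univ.map (Fin.castLEEmb h), ∀ j ∈ Finset.univ,
      j ∉ Finset.univ.map (Fin.castLEEmb h) → condKLDiv P ρ i ≤ condKLDiv P ρ j := by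
    intro i hi j _ hj
    obtain ⟨i, rfl⟩ : ∃ i', Fin.castLE h i' = i := by simpa using hi
    refine hP.monotone_condKLDiv ρ (le_of_not_ge fun hji => hj ?_)
    exact Finset.mem_map.2 ⟨⟨j, (Fin.le_def.1 hji).trans_lt i.is_lt⟩, Finset.mem_univ _, rfl⟩
  simpa using card_mul_sum_le_card_mul_sum (Finset.subset_univ _) hcross

theorem Exchangeable.relEntropy_initialMarginal_le [StandardBorelSpace E] [IsProbabilityMeasure P]
    (hP : Exchangeable P) (ρ : Measure E) [IsProbabilityMeasure ρ] {k : ℕ} (h : k ≤ N)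
    (hN : 0 < N) :
    relEntropy (initialMarginal P h) (Measure.pi fun _ => ρ)
      ≤ ((k / N : ℝ) : EReal) * relEntropy P (Measure.pi fun _ => ρ) := by
  have hcoe : ((k / N : ℝ) : EReal) = ((k / N : ENNReal) : EReal) := by
    rw [← EReal.coe_ennreal_toReal (by finiteness), ENNReal.toReal_div,
      ENNReal.toReal_natCast, ENNReal.toReal_natCast]
  rw [relEntropy_eq_klDiv_s14 (by simp), relEntropy_eq_klDiv_s14 (by simp), hcoe, ← EReal.coe_ennreal_mul,
    EReal.coe_ennreal_le_coe_ennreal_iff, ← ENNReal.mul_div_right_comm,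
    ENNReal.le_div_iff_mul_le (by simp [hN.ne']) (by simp), mul_comm]
  exact hP.klDiv_initialMarginal_le ρ h

end Exchangeable

/-- **Subadditivity of relative entropy and the Csiszár–Kullback–Pinsker inequality for
marginals of exchangeable laws.**  Let `E` be a standard Borel space, `ρ̄` a probability
measure on `E`, `N ≥ k ≥ 1`, and let `ρ_N` be an exchangeable probability measure on
`E^N` with marginal `ρ_{N,k}` on the first `k` coordinates.  Then (with the inequalities
in the extended reals, squaring the Pinsker bounds):
`‖ρ_{N,k} − ρ̄^{⊗k}‖²_TV ≤ 2 H(ρ_{N,k} | ρ̄^{⊗k}) ≤ 2 (k/N) H(ρ_N | ρ̄^{⊗N})`;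
in particular `H(ρ_{N,k} | ρ̄^{⊗k}) ≤ (k/N) H(ρ_N | ρ̄^{⊗N})`. -/
theorem statement14 {E : Type*} [MeasurableSpace E] [StandardBorelSpace E]
    (ρ : Measure E) [IsProbabilityMeasure ρ]
    {N k : ℕ} (hk : 1 ≤ k) (hkN : k ≤ N)
    (ρN : Measure (Fin N → E)) [IsProbabilityMeasure ρN]
    (hexch : ∀ σ : Equiv.Perm (Fin N), Measure.map (fun x => x ∘ σ) ρN = ρN)
    (ρNk : Measure (Fin k → E)) [IsProbabilityMeasure ρNk]
    (hmarg : ρNk =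
      Measure.map (fun (x : Fin N → E) (i : Fin k) => x (Fin.castLE hkN i)) ρN) :
    ((tvNorm ρNk (Measure.pi fun _ : Fin k => ρ) ^ 2 : ℝ) : EReal)
        ≤ ((2 : ℝ) : EReal) * relEntropy ρNk (Measure.pi fun _ : Fin k => ρ) ∧
    relEntropy ρNk (Measure.pi fun _ : Fin k => ρ)
        ≤ (((k : ℝ) / (N : ℝ) : ℝ) : EReal) * relEntropy ρN (Measure.pi fun _ : Fin N => ρ) ∧
    ((tvNorm ρNk (Measure.pi fun _ : Fin k => ρ) ^ 2 : ℝ) : EReal)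
        ≤ ((2 * (k : ℝ) / (N : ℝ) : ℝ) : EReal)
            * relEntropy ρN (Measure.pi fun _ : Fin N => ρ) := by
  subst hmarg
  have hpinsker := tvNorm_sq_le_two_mul_relEntropy (initialMarginal ρN hkN) (Measure.pi fun _ => ρ)
  have hsub := Exchangeable.relEntropy_initialMarginal_le hexch ρ hkN (hk.trans hkN)
  refine ⟨hpinsker, hsub, hpinsker.trans ?_⟩
  rw [mul_div_assoc, EReal.coe_mul, mul_assoc]
  gcongr
end
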